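/- Let n ≥ 2 be an integer, let 0 < a < 1, and let s ∈ ℝ. For y ∈ (-1,1) and f ∈ C_c^∞(ℝⁿ \ {0}), let f_y be the function whose Fourier transform is f̂_y(ξ) = e^{i y |ξ|} f̂(ξ). Assume there exists a constant C > 0, independent of f, such that for every radial function f ∈ C_c^∞(ℝⁿ \ {0}): ∫_{-1}^{1} ‖S^a f_y‖²_{L²(Bⁿ, L^∞(B))} dy ≤ C ‖f‖²_{H^s(ℝⁿ)}. Then s ≥ a/4. -/

import Mathlib

open MeasureTheory Real
open scoped InnerProductSpace

noncomputable section

/-- The Fourier transform `f̂(ξ) = ∫ e^{-i x·ξ} f(x) dx` on `ℝⁿ`. -/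
def FT (n : ℕ) (f : EuclideanSpace ℝ (Fin n) → ℂ) (ξ : EuclideanSpace ℝ (Fin n)) : ℂ :=
  ∫ x, Complex.exp (-(Complex.I * ((⟪x, ξ⟫_ℝ : ℝ) : ℂ))) * f x

/-- The oscillatory integral `S^a g(x,t) = (2π)^{-n} ∫ e^{i(x·ξ + t|ξ|^a)} ĝ(ξ) dξ`,
expressed in terms of the Fourier transform `g = ĝ` of the test object. -/
def SoscHat (n : ℕ) (a : ℝ) (g : EuclideanSpace ℝ (Fin n) → ℂ)
    (x : EuclideanSpace ℝ (Fin n)) (t : ℝ) : ℂ :=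
  (((2 * π) ^ n : ℝ) : ℂ)⁻¹ *
    ∫ ξ, Complex.exp (Complex.I * ((⟪x, ξ⟫_ℝ + t * ‖ξ‖ ^ a : ℝ) : ℂ)) * g ξ

open scoped FourierTransform

theorem FT_smul_two_pi (n : ℕ) (f : EuclideanSpace ℝ (Fin n) → ℂ)
    (η : EuclideanSpace ℝ (Fin n)) : FT n f ((2 * π) • η) = 𝓕 f η := by
  rw [FT, Real.fourier_eq']
  congr 1 with x
  rw [smul_eq_mul, inner_smul_right]
  congr 2
  push_cast
  ring

theorem integral_eq_two_pi_pow_mul {n : ℕ} {F : Type*} [NormedAddCommGroup F] [NormedSpace ℝ F]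
    (g : EuclideanSpace ℝ (Fin n) → F) :
    ∫ ξ, g ξ = (2 * π) ^ n • ∫ η, g ((2 * π) • η) := by
  have hpos : 0 < (2 * π) ^ n := by positivity
  rw [Measure.integral_comp_smul, finrank_euclideanSpace_fin, abs_of_pos (inv_pos.2 hpos),
    smul_smul, mul_inv_cancel₀ hpos.ne', one_smul]

theorem SoscHat_eq_fourierInv (n : ℕ) (a : ℝ) (f : EuclideanSpace ℝ (Fin n) → ℂ) (y t : ℝ)
    (x : EuclideanSpace ℝ (Fin n)) :
    SoscHat n a (fun ξ => Complex.exp (Complex.I * ((y * ‖ξ‖ : ℝ) : ℂ)) * FT n f ξ) x t =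
      𝓕⁻ (fun η => Complex.exp (Complex.I *
        ((y * (2 * π * ‖η‖) + t * (2 * π * ‖η‖) ^ a : ℝ) : ℂ)) * 𝓕 f η) x := by
  have hpos : ((2 * π) ^ n : ℝ) ≠ 0 := by positivity
  rw [SoscHat, integral_eq_two_pi_pow_mul, Complex.real_smul, ← mul_assoc,
    inv_mul_cancel₀ (by exact_mod_cast hpos), one_mul, Real.fourierInv_eq']
  congr 1 with η
  rw [FT_smul_two_pi, norm_smul, inner_smul_right, Real.norm_of_nonneg (by positivity : 0 ≤ 2 * π),
    smul_eq_mul, real_inner_comm]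
  simp only [← mul_assoc, ← Complex.exp_add]
  congr 2
  push_cast
  ring

theorem integral_FT_eq (n : ℕ) (s : ℝ) (f : EuclideanSpace ℝ (Fin n) → ℂ) :
    ∫ ξ, (1 + ‖ξ‖ ^ 2) ^ s * ‖FT n f ξ‖ ^ 2 =
      (2 * π) ^ n * ∫ η, (1 + (2 * π * ‖η‖) ^ 2) ^ s * ‖𝓕 f η‖ ^ 2 := by
  rw [integral_eq_two_pi_pow_mul, smul_eq_mul]
  congr 2 with η
  rw [FT_smul_two_pi, norm_smul, Real.norm_of_nonneg (by positivity : 0 ≤ 2 * π)]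

/-- **Plancherel's theorem** for functions in `L¹ ∩ L²`. -/
theorem lintegral_enorm_fourierInv_sq {E : Type*} [NormedAddCommGroup E] [InnerProductSpace ℝ E]
    [FiniteDimensional ℝ E] [MeasurableSpace E] [BorelSpace E] {G : E → ℂ}
    (h1 : Integrable G) (h2 : MemLp G 2) :
    ∫⁻ x, ‖𝓕⁻ G x‖ₑ ^ 2 = ∫⁻ x, ‖G x‖ₑ ^ 2 := by
  set g : Lp ℂ 2 (volume : Measure E) := h2.toLp G with hg
  have hgG : g =ᵐ[volume] G := h2.coeFn_toLp
  have hcont : Continuous (𝓕⁻ G) := by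
    have : 𝓕⁻ G = fun x => 𝓕 G (-x) := by
      ext x
      rw [Real.fourierInv_eq_fourier_neg]
    rw [this]
    exact (VectorFourier.fourierIntegral_continuous Real.continuous_fourierChar
      (by exact continuous_inner) h1).comp continuous_neg
  have key : ((𝓕⁻ g : Lp ℂ 2 (volume : Measure E)) : E → ℂ) =ᵐ[volume] 𝓕⁻ G := by
    apply ae_eq_of_integral_contDiff_smul_eq
    · exact (Lp.memLp _).locallyIntegrable (by norm_num)
    · exact hcont.locallyIntegrable
    · intro φ hφ hφc
      have hc1 : HasCompactSupport (Complex.ofRealCLM ∘ φ) := hφc.comp_left rfl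
      have hc2 : ContDiff ℝ (⊤ : ℕ∞) (Complex.ofRealCLM ∘ φ) := by fun_prop
      set Φ : SchwartzMap E ℂ := hc1.toSchwartzMap hc2 with hΦ
      have e1 := Lp.toTemperedDistribution_apply (𝓕⁻ g : Lp ℂ 2 (volume : Measure E)) Φ
      rw [← Lp.fourierInv_toTemperedDistribution_eq, TemperedDistribution.fourierInv_apply,
        Lp.toTemperedDistribution_apply] at e1
      have e2 : ∫ x, (𝓕⁻ Φ) x • g x = ∫ x, 𝓕⁻ (Φ : E → ℂ) x • G x := by
        apply integral_congr_ae
        filter_upwards [hgG] with x hx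
        rw [hx, SchwartzMap.fourierInv_coe]
      have e3 : ∫ x, 𝓕⁻ (Φ : E → ℂ) x • G x = ∫ x, Φ x • 𝓕⁻ G x := by
        have := VectorFourier.integral_fourierIntegral_smul_eq_flip (μ := (volume : Measure E))
          (ν := (volume : Measure E)) (e := Real.fourierChar) (L := -innerₗ E) (f := Φ) (g := G)
          Real.continuous_fourierChar continuous_inner.neg Φ.integrable h1
        have flip : (-innerₗ E).flip = -innerₗ E := by
          ext v w
          simp [real_inner_comm]
        rw [flip] at this
        exact this
      calc ∫ x, φ x • (𝓕⁻ g : Lp ℂ 2 (volume : Measure E)) x = ∫ x, Φ x • (𝓕⁻ g : Lp ℂ 2 (volume : Measure E)) x := by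
            congr 1
        _ = ∫ x, Φ x • 𝓕⁻ G x := by rw [← e1, e2, e3]
        _ = _ := by congr 1
  have hnorm : ‖(𝓕⁻ g : Lp ℂ 2 (volume : Measure E))‖ = ‖g‖ := by
    rw [← Lp.norm_fourier_eq (𝓕⁻ g), FourierTransform.fourier_fourierInv_eq]
  rw [Lp.norm_def, Lp.norm_def, ENNReal.toReal_eq_toReal_iff' (Lp.eLpNorm_ne_top _)
    (Lp.eLpNorm_ne_top _), eLpNorm_congr_ae key, eLpNorm_congr_ae hgG] at hnorm
  have := congrArg (· ^ (2 : ℝ)) hnorm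
  simp only [eLpNorm_eq_lintegral_rpow_enorm_toReal (two_ne_zero) ENNReal.ofNat_ne_top,
    ENNReal.toReal_ofNat] at this
  simp only [← ENNReal.rpow_mul, one_div, inv_mul_cancel₀ (two_ne_zero' ℝ), ENNReal.rpow_one] at this
  simpa only [ENNReal.rpow_two] using this

open scoped LineDeriv Laplacian in
theorem fourier_laplacian_apply {E : Type*} [NormedAddCommGroup E] [InnerProductSpace ℝ E]
    [FiniteDimensional ℝ E] [MeasurableSpace E] [BorelSpace E] (f : SchwartzMap E ℂ) (η : E) :
    𝓕 (Δ f) η = -((2 * π * ‖η‖) ^ 2 : ℝ) * 𝓕 f η := by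
  rw [SchwartzMap.laplacian_eq_fourierMultiplierCLM, SchwartzMap.fourierMultiplierCLM_apply,
    FourierTransform.fourier_smul, FourierTransform.fourier_fourierInv_eq, smul_apply,
    SchwartzMap.smulLeftCLM_apply_apply (by fun_prop), Complex.real_smul, Complex.real_smul]
  push_cast
  ring

/-- Smooth functions on the line supported in `[1/4, 1]`. -/
def ShellProfile (h : ℝ → ℂ) : Prop :=
  ContDiff ℝ (⊤ : ℕ∞) h ∧ ∀ r, r ∉ Set.Icc (1 / 4 : ℝ) 1 → h r = 0

namespace ShellProfile

variable {h h₁ h₂ : ℝ → ℂ}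

theorem eventually_eq_zero (hh : ShellProfile h) {r : ℝ} (hr : r ∉ Set.Icc (1 / 4 : ℝ) 1) :
    h =ᶠ[nhds r] fun _ => 0 := by
  filter_upwards [isClosed_Icc.isOpen_compl.mem_nhds hr] with x hx using hh.2 x hx

theorem derivative (hh : ShellProfile h) : ShellProfile (deriv h) := by
  refine ⟨ContDiff.iterate_deriv 1 hh.1, fun r hr => ?_⟩
  rw [(hh.eventually_eq_zero hr).deriv_eq, deriv_const]

theorem add (hh₁ : ShellProfile h₁) (hh₂ : ShellProfile h₂) :
    ShellProfile (fun r => h₁ r + h₂ r) :=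
  ⟨hh₁.1.add hh₂.1, fun r hr => by simp [hh₁.2 r hr, hh₂.2 r hr]⟩

theorem mul_left {g : ℝ → ℂ} (hg : ContDiffOn ℝ (⊤ : ℕ∞) g (Set.Ioi 0)) (hh : ShellProfile h) :
    ShellProfile (fun r => g r * h r) := by
  refine ⟨contDiff_iff_contDiffAt.2 fun r => ?_, fun r hr => by simp [hh.2 r hr]⟩
  by_cases hr : r ∈ Set.Icc (1 / 4 : ℝ) 1
  · exact (hg.contDiffAt (Ioi_mem_nhds (by linarith [hr.1]))).mul hh.1.contDiffAt
  · have : (fun r => g r * h r) =ᶠ[nhds r] fun _ => 0 := by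
      filter_upwards [hh.eventually_eq_zero hr] with x hx
      rw [hx, mul_zero]
    exact contDiffAt_const.congr_of_eventuallyEq this

theorem const_mul (c : ℂ) (hh : ShellProfile h) : ShellProfile (fun r => c * h r) :=
  hh.mul_left contDiffOn_const

theorem contDiffOn_rpow (p : ℝ) :
    ContDiffOn ℝ (⊤ : ℕ∞) (fun r : ℝ => ((r ^ p : ℝ) : ℂ)) (Set.Ioi 0) := fun r hr =>
  (Complex.ofRealCLM.contDiff.contDiffAt.comp r
    (Real.contDiffAt_rpow_const_of_ne (ne_of_gt hr))).contDiffWithinAt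

theorem rpow_mul (p : ℝ) (hh : ShellProfile h) : ShellProfile (fun r => ((r ^ p : ℝ) : ℂ) * h r) :=
  hh.mul_left (contDiffOn_rpow p)

section Radial

variable {E : Type*} [NormedAddCommGroup E]

theorem comp_norm_eventually_eq_zero (hh : ShellProfile h) {x : E}
    (hx : ‖x‖ ∉ Set.Icc (1 / 4 : ℝ) 1) : (fun y : E => h ‖y‖) =ᶠ[nhds x] fun _ => 0 :=
  (hh.eventually_eq_zero hx).comp_tendsto (continuous_norm.tendsto x)

theorem tsupport_comp_norm_subset (hh : ShellProfile h) :
    tsupport (fun x : E => h ‖x‖) ⊆ {x | ‖x‖ ∈ Set.Icc (1 / 4 : ℝ) 1} := by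
  refine closure_minimal (fun x hx => ?_) (isClosed_Icc.preimage continuous_norm)
  by_contra h'
  exact hx (hh.2 _ h')

theorem zero_notMem_tsupport (hh : ShellProfile h) : (0 : E) ∉ tsupport fun x : E => h ‖x‖ := by
  intro h0
  have := (hh.tsupport_comp_norm_subset h0).1
  norm_num at this

variable [InnerProductSpace ℝ E]

theorem contDiff_comp_norm (hh : ShellProfile h) : ContDiff ℝ (⊤ : ℕ∞) fun x : E => h ‖x‖ := by
  refine contDiff_iff_contDiffAt.2 fun x => ?_
  by_cases hx : ‖x‖ ∈ Set.Icc (1 / 4 : ℝ) 1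
  · have : x ≠ 0 := norm_pos_iff.1 (by linarith [hx.1])
    exact hh.1.contDiffAt.comp x (contDiffAt_norm ℝ this)
  · exact contDiffAt_const.congr_of_eventuallyEq (hh.comp_norm_eventually_eq_zero hx)

theorem hasDerivAt_comp_norm_line {h : ℝ → ℂ} (hh : ContDiff ℝ (⊤ : ℕ∞) h) {x : E} (hx : x ≠ 0)
    (m : E) :
    HasDerivAt (fun t : ℝ => h ‖x + t • m‖) (((⟪x, m⟫_ℝ / ‖x‖ : ℝ) : ℂ) * deriv h ‖x‖) 0 := by
  have h1 : HasDerivAt (fun t : ℝ => x + t • m) m 0 := by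
    simpa using ((hasDerivAt_id (0 : ℝ)).smul_const m).const_add x
  have h2 : HasDerivAt (fun t : ℝ => ‖x + t • m‖ ^ 2) (2 * ⟪x, m⟫_ℝ) 0 := by
    simpa using h1.norm_sq
  have h3 : HasDerivAt (fun t : ℝ => ‖x + t • m‖) (⟪x, m⟫_ℝ / ‖x‖) 0 := by
    have := h2.sqrt (by simpa using hx)
    simp only [norm_nonneg, Real.sqrt_sq, zero_smul, add_zero] at this
    convert! this using 1
    field_simp
  have h4 : HasDerivAt h (deriv h ‖x‖) ‖x + (0 : ℝ) • m‖ := by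
    simpa using (hh.differentiable (by simp) ‖x‖).hasDerivAt
  convert! h4.scomp (0 : ℝ) h3 using 1

variable [FiniteDimensional ℝ E]

theorem hasCompactSupport_comp_norm (hh : ShellProfile h) :
    HasCompactSupport fun x : E => h ‖x‖ := by
  refine (isCompact_closedBall (0 : E) 1).of_isClosed_subset (isClosed_tsupport _) fun x hx => ?_
  simpa using (hh.tsupport_comp_norm_subset hx).2

variable (E) in
/-- The radial Schwartz function `x ↦ h ‖x‖`. -/
def toSchwartz (hh : ShellProfile h) : SchwartzMap E ℂ :=
  HasCompactSupport.toSchwartzMap (f := fun x : E => h ‖x‖) hh.hasCompactSupport_comp_norm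
    hh.contDiff_comp_norm

theorem toSchwartz_apply (hh : ShellProfile h) (x : E) : hh.toSchwartz E x = h ‖x‖ := rfl

open scoped LineDeriv Laplacian

theorem lineDerivOp_toSchwartz (hh : ShellProfile h) (m x : E) :
    ∂_{m} (hh.toSchwartz E) x =
      ((⟪x, m⟫_ℝ : ℝ) : ℂ) * (hh.derivative.rpow_mul (-1)).toSchwartz E x := by
  rw [SchwartzMap.lineDerivOp_apply, lineDeriv]
  by_cases hx : x = 0
  · subst hx
    have : (fun t : ℝ => hh.toSchwartz E ((0 : E) + t • m)) =ᶠ[nhds 0] fun _ => 0 := by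
      have h0 : ‖(0 : E)‖ ∉ Set.Icc (1 / 4 : ℝ) 1 := by norm_num
      have hc : Filter.Tendsto (fun t : ℝ => (0 : E) + t • m) (nhds 0) (nhds 0) := by
        have : Continuous fun t : ℝ => (0 : E) + t • m := by fun_prop
        simpa using this.tendsto 0
      exact (hh.comp_norm_eventually_eq_zero h0).comp_tendsto hc
    rw [this.deriv_eq]
    simp
  · have := (hasDerivAt_comp_norm_line hh.1 hx m).deriv
    simp only [toSchwartz_apply]
    rw [this, rpow_neg_one]
    push_cast
    ring

theorem laplacian_toSchwartz (hh : ShellProfile h) (x : E) :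
    Δ (hh.toSchwartz E) x = deriv (deriv h) ‖x‖ +
      ((Module.finrank ℝ E - 1 : ℝ) : ℂ) * ((‖x‖⁻¹ : ℝ) : ℂ) * deriv h ‖x‖ := by
  set b := stdOrthonormalBasis ℝ E
  set g : ℝ → ℂ := fun r => ((r ^ (-1 : ℝ) : ℝ) : ℂ) * deriv h r with hg
  have hgS : ShellProfile g := hh.derivative.rpow_mul (-1)
  have step : ∀ m : E, ∂_{m} (∂_{m} (hh.toSchwartz E)) x =
      ((⟪m, m⟫_ℝ : ℝ) : ℂ) * g ‖x‖ +
        ((⟪x, m⟫_ℝ ^ 2 : ℝ) : ℂ) * ((‖x‖⁻¹ : ℝ) : ℂ) * deriv g ‖x‖ := by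
    intro m
    have hD : HasDerivAt (fun t : ℝ => hgS.toSchwartz E (x + t • m))
        (∂_{m} (hgS.toSchwartz E) x) 0 := by
      rw [SchwartzMap.lineDerivOp_apply]
      exact ((hgS.toSchwartz E).differentiableAt.lineDifferentiableAt).hasLineDerivAt
    have hI : HasDerivAt (fun t : ℝ => ((⟪x + t • m, m⟫_ℝ : ℝ) : ℂ)) ((⟪m, m⟫_ℝ : ℝ) : ℂ) 0 := by
      refine HasDerivAt.ofReal_comp ?_
      simp only [inner_add_left, inner_smul_left]
      simpa using ((hasDerivAt_id (0 : ℝ)).mul_const ⟪m, m⟫_ℝ).const_add ⟪x, m⟫_ℝ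
    have := (hI.mul hD).deriv
    rw [SchwartzMap.lineDerivOp_apply, lineDeriv]
    simp only [lineDerivOp_toSchwartz hh m]
    refine this.trans ?_
    rw [lineDerivOp_toSchwartz hgS m x]
    simp only [toSchwartz_apply, zero_smul, add_zero, rpow_neg_one]
    push_cast
    ring
  rw [SchwartzMap.laplacian_eq_sum b, sum_apply]
  simp only [step]
  rw [Finset.sum_add_distrib, ← Finset.sum_mul, ← Finset.sum_mul, ← Finset.sum_mul,
    ← Complex.ofReal_sum, ← Complex.ofReal_sum, b.sum_sq_inner_left]
  have h1 : ∑ i, ⟪b i, b i⟫_ℝ = (Module.finrank ℝ E : ℝ) := by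
    simp
  rw [h1]
  by_cases hx : ‖x‖ ∈ Set.Icc (1 / 4 : ℝ) 1
  · have hpos : 0 < ‖x‖ := by linarith [hx.1]
    have hd : HasDerivAt g (((-(‖x‖ ^ 2)⁻¹ : ℝ) : ℂ) * deriv h ‖x‖ +
        ((‖x‖⁻¹ : ℝ) : ℂ) * deriv (deriv h) ‖x‖) ‖x‖ := by
      have e1 : HasDerivAt (fun r : ℝ => ((r ^ (-1 : ℝ) : ℝ) : ℂ)) ((-(‖x‖ ^ 2)⁻¹ : ℝ) : ℂ) ‖x‖ := by
        simp only [rpow_neg_one]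
        exact (hasDerivAt_inv hpos.ne').ofReal_comp
      have e2 := (hh.derivative.1.differentiable (by simp) ‖x‖).hasDerivAt
      have := e1.mul e2
      rw [rpow_neg_one] at this
      exact this
    rw [hd.deriv, hg]
    simp only [rpow_neg_one]
    have hc : ((‖x‖ : ℝ) : ℂ) ≠ 0 := by exact_mod_cast hpos.ne'
    push_cast
    field_simp
    ring
  · rw [hgS.2 _ hx, hgS.derivative.2 _ hx, hh.derivative.2 _ hx, hh.derivative.derivative.2 _ hx]
    simp

end Radial

end ShellProfile

section

variable {E : Type*} [NormedAddCommGroup E] [InnerProductSpace ℝ E] [FiniteDimensional ℝ E]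
  [MeasurableSpace E] [BorelSpace E]

theorem lintegral_enorm_fourier_sq (f : SchwartzMap E ℂ) :
    ∫⁻ x, ‖𝓕 (f : E → ℂ) x‖ₑ ^ 2 = ∫⁻ x, ‖f x‖ₑ ^ 2 := by
  rw [← SchwartzMap.fourier_coe, ← lintegral_enorm_fourierInv_sq (𝓕 f).integrable ((𝓕 f).memLp 2),
    ← SchwartzMap.fourierInv_coe, FourierTransform.fourierInv_fourier_eq]

/-- The radial function `x ↦ ‖x‖ ^ q * ψ ‖x‖`. -/
def shellFn {E : Type*} [NormedAddCommGroup E] (q : ℝ) (ψ : ℝ → ℂ) (x : E) : ℂ :=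
  ((‖x‖ ^ q : ℝ) : ℂ) * ψ ‖x‖

theorem ShellProfile.coe_toSchwartz_rpow_mul {E : Type*} [NormedAddCommGroup E]
    [InnerProductSpace ℝ E] [FiniteDimensional ℝ E] {ψ : ℝ → ℂ} (hψ : ShellProfile ψ) (q : ℝ) :
    ((hψ.rpow_mul q).toSchwartz E : E → ℂ) = shellFn q ψ := rfl

theorem ShellProfile.lintegral_fourier_shellFn {ψ : ℝ → ℂ} (hψ : ShellProfile ψ) (q : ℝ) :
    ∫⁻ η : E, ‖𝓕 (shellFn q ψ : E → ℂ) η‖ₑ ^ 2 = ∫⁻ x : E, ‖shellFn q ψ x‖ₑ ^ 2 := by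
  rw [← hψ.coe_toSchwartz_rpow_mul, lintegral_enorm_fourier_sq]

theorem ShellProfile.deriv_rpow_mul {ψ : ℝ → ℂ} (hψ : ContDiff ℝ (⊤ : ℕ∞) ψ) (q : ℝ) {r : ℝ}
    (hr : 0 < r) :
    deriv (fun r => ((r ^ q : ℝ) : ℂ) * ψ r) r =
      q * (((r ^ (q - 1) : ℝ) : ℂ) * ψ r) + ((r ^ q : ℝ) : ℂ) * deriv ψ r := by
  have h1 : HasDerivAt (fun r : ℝ => ((r ^ q : ℝ) : ℂ)) ((q * r ^ (q - 1) : ℝ) : ℂ) r :=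
    (Real.hasDerivAt_rpow_const (Or.inl hr.ne')).ofReal_comp
  have h2 := (hψ.differentiable (by simp) r).hasDerivAt
  rw [(h1.fun_mul h2).deriv]
  push_cast
  ring

/-- The Laplacian acts on `‖x‖ ^ p ψ(‖x‖)`, with `p = -(d - 1) / 2`, as a one-dimensional
Schrödinger operator. -/
theorem ShellProfile.fourier_shellFn_deriv_deriv {ψ : ℝ → ℂ} (hψ : ShellProfile ψ) {p : ℝ}
    (hp : (Module.finrank ℝ E : ℝ) - 1 = -2 * p) (η : E) :
    𝓕 (shellFn p (deriv (deriv ψ)) : E → ℂ) η = -((2 * π * ‖η‖) ^ 2 : ℝ) * 𝓕 (shellFn p ψ : E → ℂ) η +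
      (p * (p + 1) : ℝ) * 𝓕 (shellFn (p - 2) ψ : E → ℂ) η := by
  have hS := fourier_laplacian_apply ((hψ.rpow_mul p).toSchwartz E) η
  have key : (hψ.derivative.derivative.rpow_mul p).toSchwartz E =
      Laplacian.laplacian ((hψ.rpow_mul p).toSchwartz E) +
        ((p * (p + 1) : ℝ) : ℂ) • (hψ.rpow_mul (p - 2)).toSchwartz E := by
    ext x
    rw [add_apply, smul_apply, ShellProfile.laplacian_toSchwartz, hp]
    simp only [ShellProfile.toSchwartz_apply]
    by_cases hx : ‖x‖ ∈ Set.Icc (1 / 4 : ℝ) 1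
    · have hpos : 0 < ‖x‖ := by linarith [hx.1]
      have hev : deriv (fun r => ((r ^ p : ℝ) : ℂ) * ψ r) =ᶠ[nhds ‖x‖] fun r =>
          p * (((r ^ (p - 1) : ℝ) : ℂ) * ψ r) + ((r ^ p : ℝ) : ℂ) * deriv ψ r := by
        filter_upwards [Ioi_mem_nhds hpos] with r hr
        exact ShellProfile.deriv_rpow_mul hψ.1 p hr
      rw [hev.deriv_eq, deriv_fun_add, deriv_const_mul, ShellProfile.deriv_rpow_mul hψ.1 p hpos,
        ShellProfile.deriv_rpow_mul hψ.1 (p - 1) hpos,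
        ShellProfile.deriv_rpow_mul hψ.derivative.1 p hpos]
      · have e1 : ‖x‖ ^ (p - 1) = ‖x‖ ^ p * ‖x‖⁻¹ := by
          rw [rpow_sub_one hpos.ne', div_eq_mul_inv]
        have e2 : ‖x‖ ^ (p - 1 - 1) = ‖x‖ ^ p * ‖x‖⁻¹ * ‖x‖⁻¹ := by
          rw [rpow_sub_one hpos.ne', e1, div_eq_mul_inv]
        rw [show p - 2 = p - 1 - 1 by ring, e2, e1]
        push_cast
        rw [smul_eq_mul]
        ring
      · exact ((hψ.rpow_mul (p - 1)).1.differentiable (by simp)) _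
      · exact (((hψ.rpow_mul (p - 1)).const_mul p).1.differentiable (by simp)) _
      · exact ((hψ.derivative.rpow_mul p).1.differentiable (by simp)) _
    · rw [hψ.derivative.derivative.2 _ hx, hψ.2 _ hx, (hψ.rpow_mul p).derivative.2 _ hx,
        (hψ.rpow_mul p).derivative.derivative.2 _ hx]
      simp
  have := congrArg (fun F : SchwartzMap E ℂ => (𝓕 F) η) key
  simp only [FourierTransform.fourier_add, FourierTransform.fourier_smul] at this
  rw [add_apply, smul_apply, hS] at this
  simp only [SchwartzMap.fourier_coe, smul_eq_mul] at this
  exact this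

end

section Polar

variable {E : Type*} [NormedAddCommGroup E] [NormedSpace ℝ E] [FiniteDimensional ℝ E]
  [MeasurableSpace E] [BorelSpace E]

/-- Integration of radial functions in polar coordinates. -/
theorem lintegral_fun_norm_addHaar [Nontrivial E] (μ : Measure E) [μ.IsAddHaarMeasure]
    {f : ℝ → ENNReal} (hf : Measurable f) :
    ∫⁻ x, f ‖x‖ ∂μ = μ.toSphere Set.univ *
      ∫⁻ r in Set.Ioi (0 : ℝ), ENNReal.ofReal (r ^ (Module.finrank ℝ E - 1)) * f r :=
  calc
    ∫⁻ x, f ‖x‖ ∂μ = ∫⁻ x : ({(0)}ᶜ : Set E), f ‖x.1‖ ∂(μ.comap (↑)) := by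
      rw [lintegral_subtype_comap (measurableSet_singleton _).compl fun x => f ‖x‖,
        restrict_compl_singleton]
    _ = ∫⁻ x, f x.2 ∂μ.toSphere.prod (.volumeIoiPow (Module.finrank ℝ E - 1)) := by
      simpa using μ.measurePreserving_homeomorphUnitSphereProd.lintegral_comp_emb
        (Homeomorph.measurableEmbedding _) (f ∘ Subtype.val ∘ Prod.snd)
    _ = μ.toSphere Set.univ *
        ∫⁻ x : Set.Ioi (0 : ℝ), f x ∂.volumeIoiPow (Module.finrank ℝ E - 1) := by
      rw [lintegral_prod _ (by fun_prop)]
      simp [mul_comm]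
    _ = _ := by
      rw [Measure.volumeIoiPow, lintegral_withDensity_eq_lintegral_mul _ (by fun_prop)
        (by fun_prop)]
      simp only [Pi.mul_apply]
      rw [lintegral_subtype_comap measurableSet_Ioi fun r =>
        ENNReal.ofReal (r ^ (Module.finrank ℝ E - 1)) * f r]

theorem lintegral_enorm_shellFn_sq {E : Type*} [NormedAddCommGroup E] [InnerProductSpace ℝ E]
    [FiniteDimensional ℝ E] [MeasurableSpace E] [BorelSpace E] [Nontrivial E] {ψ : ℝ → ℂ} (hψ : Measurable ψ) {p : ℝ}
    (hp : (Module.finrank ℝ E : ℝ) - 1 = -2 * p) :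
    ∫⁻ x : E, ‖shellFn p ψ x‖ₑ ^ 2 = (volume : Measure E).toSphere Set.univ *
      ∫⁻ r in Set.Ioi (0 : ℝ), ‖ψ r‖ₑ ^ 2 := by
  have hm : Measurable fun r : ℝ => ‖((r ^ p : ℝ) : ℂ) * ψ r‖ₑ ^ 2 := by fun_prop
  have := lintegral_fun_norm_addHaar (volume : Measure E) hm
  refine this.trans ?_
  congr 1
  refine setLIntegral_congr_fun measurableSet_Ioi fun r hr => ?_
  have hr0 : 0 < r := hr
  have hd : 1 ≤ Module.finrank ℝ E := Module.finrank_pos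
  simp only [enorm_mul, mul_pow]
  rw [← mul_assoc]
  have h1 : ‖((r ^ p : ℝ) : ℂ)‖ₑ = ENNReal.ofReal (r ^ p) := by
    rw [← ofReal_norm, Complex.norm_real, Real.norm_of_nonneg (by positivity)]
  have h2 : r ^ (Module.finrank ℝ E - 1) * (r ^ p) ^ 2 = 1 := by
    rw [← Real.rpow_natCast, ← Real.rpow_natCast (r ^ p), ← Real.rpow_mul hr0.le,
      ← Real.rpow_add hr0, Nat.cast_sub hd]
    push_cast
    rw [hp]
    ring_nf
    simp
  rw [h1, ← ENNReal.ofReal_pow (by positivity), ← ENNReal.ofReal_mul (by positivity), h2]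
  simp

end Polar

/-- Smooth functions on the line supported in `[3/8, 5/8]`. -/
def CoreProfile (ψ : ℝ → ℂ) : Prop :=
  ContDiff ℝ (⊤ : ℕ∞) ψ ∧ ∀ r, r ∉ Set.Icc (3 / 8 : ℝ) (5 / 8) → ψ r = 0

namespace CoreProfile

variable {ψ : ℝ → ℂ}

theorem derivative (hψ : CoreProfile ψ) : CoreProfile (deriv ψ) := by
  refine ⟨ContDiff.iterate_deriv 1 hψ.1, fun r hr => ?_⟩
  have : ψ =ᶠ[nhds r] fun _ => 0 := by
    filter_upwards [isClosed_Icc.isOpen_compl.mem_nhds hr] with x hx using hψ.2 x hx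
  rw [this.deriv_eq, deriv_const]

theorem shift (hψ : CoreProfile ψ) {s : ℝ} (hs : |s| ≤ 1 / 8) :
    ShellProfile fun r => ψ (r - s) := by
  refine ⟨hψ.1.comp (by fun_prop), fun r hr => hψ.2 _ fun h => hr ?_⟩
  rw [abs_le] at hs
  constructor <;> linarith [h.1, h.2]

theorem shellProfile (hψ : CoreProfile ψ) : ShellProfile ψ := by
  simpa using hψ.shift (s := 0) (by norm_num)

theorem exists_norm_le (hψ : CoreProfile ψ) : ∃ M, ∀ r, ‖ψ r‖ ≤ M := by
  have hc : HasCompactSupport ψ := HasCompactSupport.intro isCompact_Icc hψ.2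
  exact hψ.1.continuous.bounded_above_of_compact_support hc

theorem exists_norm_shellFn_le (E : Type*) [NormedAddCommGroup E] (hψ : CoreProfile ψ) (q : ℝ) :
    ∃ M, ∀ s, |s| ≤ 1 / 8 → ∀ x : E, ‖shellFn q (fun r => ψ (r - s)) x‖ ≤
      (Metric.closedBall (0 : E) 1).indicator (fun _ => M) x := by
  obtain ⟨M, hM⟩ := hψ.exists_norm_le
  have hM0 : 0 ≤ M := (norm_nonneg _).trans (hM 0)
  obtain ⟨B, hB⟩ := (isCompact_Icc (a := (1 / 4 : ℝ)) (b := 1)).exists_bound_of_continuousOn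
    (f := fun r : ℝ => r ^ q) (fun r hr =>
      (Real.continuousAt_rpow_const r q (Or.inl (by linarith [hr.1]))).continuousWithinAt)
  refine ⟨B * M, fun s hs x => ?_⟩
  by_cases hx : ‖x‖ ∈ Set.Icc (1 / 4 : ℝ) 1
  · rw [Set.indicator_of_mem (by simpa using hx.2), shellFn, norm_mul, Complex.norm_real]
    exact mul_le_mul (hB _ hx) (hM _) (norm_nonneg _) ((norm_nonneg _).trans (hB _ hx))
  · have h0 : ψ (‖x‖ - s) = 0 := (hψ.shift hs).2 _ hx
    rw [shellFn, h0, mul_zero, norm_zero]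
    have hB0 : 0 ≤ B := (norm_nonneg _).trans (hB (1 / 2) (by norm_num))
    exact Set.indicator_nonneg (fun _ _ => by positivity) _

variable {E : Type*} [NormedAddCommGroup E] [InnerProductSpace ℝ E] [FiniteDimensional ℝ E]
  [MeasurableSpace E] [BorelSpace E]

theorem integrable_shellFn (hψ : CoreProfile ψ) (q : ℝ) {s : ℝ} (hs : |s| ≤ 1 / 8) :
    Integrable (shellFn q (fun r => ψ (r - s)) : E → ℂ) := by
  rw [← (hψ.shift hs).coe_toSchwartz_rpow_mul]
  exact SchwartzMap.integrable _

theorem hasDerivAt_fourier_shellFn (hψ : CoreProfile ψ) (q : ℝ) (η : E) {s : ℝ}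
    (hs : s ∈ Set.Ioo (-1 / 8 : ℝ) (1 / 8)) :
    HasDerivAt (fun s => 𝓕 (shellFn q (fun r => ψ (r - s)) : E → ℂ) η)
      (-𝓕 (shellFn q (fun r => deriv ψ (r - s)) : E → ℂ) η) s := by
  have habs : ∀ s ∈ Set.Ioo (-1 / 8 : ℝ) (1 / 8), |s| ≤ 1 / 8 := fun s hs =>
    abs_le.2 ⟨by linarith [hs.1], by linarith [hs.2]⟩
  obtain ⟨M, hM⟩ := hψ.derivative.exists_norm_shellFn_le E q
  have hshell := fun s hs => (hψ.integrable_shellFn (E := E) q (habs s hs))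
  have hshell' := (hψ.derivative.integrable_shellFn (E := E) q (habs s hs))
  have := (hasDerivAt_integral_of_dominated_loc_of_deriv_le (μ := (volume : Measure E))
    (F := fun s x => Real.fourierChar (-⟪x, η⟫_ℝ) • shellFn q (fun r => ψ (r - s)) x)
    (F' := fun s x => Real.fourierChar (-⟪x, η⟫_ℝ) • (-shellFn q (fun r => deriv ψ (r - s)) x))
    (bound := (Metric.closedBall (0 : E) 1).indicator (fun _ => M))
    (x₀ := s) (Ioo_mem_nhds hs.1 hs.2) ?_ ?_ ?_ ?_ ?_ ?_).2
  · rw [Real.fourier_eq, ← integral_neg]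
    simp only [Real.fourier_eq]
    simpa only [smul_neg] using this
  · filter_upwards [Ioo_mem_nhds hs.1 hs.2] with t ht
    exact ((Real.fourierIntegral_convergent_iff η).2 (hshell t ht)).aestronglyMeasurable
  · exact (Real.fourierIntegral_convergent_iff η).2 (hshell s hs)
  · exact ((Real.fourierIntegral_convergent_iff η).2 hshell'.neg).aestronglyMeasurable
  · refine .of_forall fun x t ht => ?_
    rw [Circle.norm_smul, norm_neg]
    exact hM t (habs t ht) x
  · rw [integrable_indicator_iff measurableSet_closedBall]
    exact (integrableOn_const_iff (by simp)).2 (Or.inr measure_closedBall_lt_top)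
  · refine .of_forall fun x t ht => ?_
    have h1 : HasDerivAt (fun t => ψ (‖x‖ - t)) (-deriv ψ (‖x‖ - t)) t := by
      have h0 := (hψ.1.differentiable (by simp) (‖x‖ - t)).hasDerivAt
      exact h0.comp_const_sub ‖x‖ t
    have h2 := (h1.const_mul ((‖x‖ ^ q : ℝ) : ℂ)).const_smul (Real.fourierChar (-⟪x, η⟫_ℝ))
    simp only [shellFn, ← mul_neg]
    exact h2

theorem stronglyMeasurable_fourier_shellFn (hψ : CoreProfile ψ) (q : ℝ) :
    StronglyMeasurable fun z : ℝ × E =>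
      𝓕 (shellFn q (fun r => ψ (r - z.1)) : E → ℂ) z.2 := by
  simp only [Real.fourier_eq]
  have hψm : Measurable ψ := hψ.1.continuous.measurable
  have : StronglyMeasurable (fun w : (ℝ × E) × E =>
      Real.fourierChar (-⟪w.2, w.1.2⟫_ℝ) • shellFn q (fun r => ψ (r - w.1.1)) w.2) := by
    refine Measurable.stronglyMeasurable ?_
    simp only [Circle.smul_def, shellFn, smul_eq_mul]
    have : Continuous fun w : (ℝ × E) × E => ((Real.fourierChar (-⟪w.2, w.1.2⟫_ℝ) : Circle) : ℂ) := by
      fun_prop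
    exact this.measurable.mul (by fun_prop)
  exact this.integral_prod_right'

end CoreProfile

theorem enorm_add_sq_le {F : Type*} [SeminormedAddCommGroup F] (a b : F) :
    ‖a + b‖ₑ ^ 2 ≤ 2 * ‖a‖ₑ ^ 2 + 2 * ‖b‖ₑ ^ 2 := by
  simp only [← ofReal_norm]
  rw [← ENNReal.ofReal_ofNat, ← ENNReal.ofReal_pow (norm_nonneg _),
    ← ENNReal.ofReal_pow (norm_nonneg _), ← ENNReal.ofReal_pow (norm_nonneg _),
    ← ENNReal.ofReal_mul (by norm_num), ← ENNReal.ofReal_mul (by norm_num),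
    ← ENNReal.ofReal_add (by positivity) (by positivity)]
  refine ENNReal.ofReal_le_ofReal ?_
  nlinarith [norm_add_le a b, norm_nonneg (a + b), sq_nonneg (‖a‖ - ‖b‖)]

theorem sq_lintegral_le {α : Type*} [MeasurableSpace α] (μ : Measure α) {f : α → ENNReal}
    (hf : AEMeasurable f μ) : (∫⁻ x, f x ∂μ) ^ 2 ≤ μ Set.univ * ∫⁻ x, f x ^ 2 ∂μ := by
  have := ENNReal.lintegral_mul_le_Lp_mul_Lq μ Real.HolderConjugate.two_two hf
    (aemeasurable_const (b := (1 : ENNReal)))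
  simp only [Pi.mul_apply, mul_one, lintegral_const, ENNReal.rpow_two, one_pow, one_mul] at this
  calc (∫⁻ x, f x ∂μ) ^ 2 ≤ ((∫⁻ x, f x ^ 2 ∂μ) ^ (1 / 2 : ℝ) * μ Set.univ ^ (1 / 2 : ℝ)) ^ 2 := by
        gcongr
    _ = _ := by
        rw [mul_pow, ← ENNReal.rpow_natCast, ← ENNReal.rpow_natCast, ← ENNReal.rpow_mul,
          ← ENNReal.rpow_mul]
        norm_num [mul_comm]

/-- Duhamel's formula for the oscillator `h'' + k² h = e`, as an `L²` bound. -/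
theorem enorm_sub_cos_mul_sq_le {h h' e : ℝ → ℂ} {k z : ℝ} (hk : k ≠ 0) (hz : 0 ≤ z)
    (hh : ∀ s ∈ Set.Icc 0 z, HasDerivAt h (h' s) s)
    (hh' : ∀ s ∈ Set.Icc 0 z, HasDerivAt h' (e s - (k ^ 2 : ℝ) * h s) s)
    (h0 : h' 0 = 0) (he : ContinuousOn e (Set.Icc 0 z)) :
    ‖h z - (cos (k * z) : ℝ) * h 0‖ₑ ^ 2 ≤
      ENNReal.ofReal (z ^ 3) * ∫⁻ s in Set.Ioc 0 z, ‖e s‖ₑ ^ 2 := by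
  set w : ℝ → ℝ := fun s => sin (k * (z - s)) / k with hw
  have hwc : Continuous w := by fun_prop
  have hwb : ∀ s ∈ Set.Icc 0 z, |w s| ≤ z := fun s hs => by
    rw [hw]
    simp only
    rw [abs_div, div_le_iff₀ (abs_pos.2 hk)]
    refine (abs_sin_le_abs).trans ?_
    rw [abs_mul, mul_comm, abs_of_nonneg (by linarith [hs.2] : 0 ≤ z - s)]
    gcongr
    linarith [hs.1]
  have hderiv : ∀ s ∈ Set.Icc 0 z, HasDerivAt (fun s => ((cos (k * (z - s)) : ℝ) : ℂ) * h s +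
      (w s : ℂ) * h' s) ((w s : ℂ) * e s) s := by
    intro s hs
    have hl : HasDerivAt (fun s : ℝ => k * (z - s)) (-k) s := by
      simpa using ((hasDerivAt_id s).const_sub z).const_mul k
    have hcos : HasDerivAt (fun s => ((cos (k * (z - s)) : ℝ) : ℂ))
        ((-sin (k * (z - s)) * -k : ℝ) : ℂ) s := hl.cos.ofReal_comp
    have hsin : HasDerivAt (fun s => ((w s : ℝ) : ℂ))
        ((cos (k * (z - s)) * -k / k : ℝ) : ℂ) s := (hl.sin.div_const k).ofReal_comp
    have := (hcos.fun_mul (hh s hs)).fun_add (hsin.fun_mul (hh' s hs))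
    convert! this using 1
    have hkc : (k : ℂ) ≠ 0 := by exact_mod_cast hk
    simp only [hw]
    push_cast
    field_simp
    ring
  have hcont : ContinuousOn (fun s => (w s : ℂ) * e s) (Set.uIcc 0 z) := by
    rw [Set.uIcc_of_le hz]
    exact (by fun_prop : Continuous fun s => (w s : ℂ)).continuousOn.mul he
  have hFTC := intervalIntegral.integral_eq_sub_of_hasDerivAt (a := 0) (b := z)
    (fun s hs => hderiv s (by rwa [Set.uIcc_of_le hz] at hs)) hcont.intervalIntegrable
  have hval : h z - (cos (k * z) : ℝ) * h 0 = ∫ s in Set.Ioc 0 z, (w s : ℂ) * e s := by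
    rw [← intervalIntegral.integral_of_le hz, hFTC]
    simp [hw, h0]
  have hmeas : AEMeasurable (fun s => ‖e s‖ₑ) (volume.restrict (Set.Ioc 0 z)) :=
    ((he.mono Set.Ioc_subset_Icc_self).aestronglyMeasurable measurableSet_Ioc).enorm
  calc ‖h z - (cos (k * z) : ℝ) * h 0‖ₑ ^ 2
      ≤ (∫⁻ s in Set.Ioc 0 z, ENNReal.ofReal z * ‖e s‖ₑ) ^ 2 := by
        gcongr
        rw [hval]
        refine (enorm_integral_le_lintegral_enorm _).trans ?_
        refine setLIntegral_mono' measurableSet_Ioc fun s hs => ?_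
        rw [enorm_mul]
        gcongr
        rw [← ofReal_norm, Complex.norm_real]
        exact ENNReal.ofReal_le_ofReal (hwb s (Set.Ioc_subset_Icc_self hs))
    _ = ENNReal.ofReal z ^ 2 * (∫⁻ s in Set.Ioc 0 z, ‖e s‖ₑ) ^ 2 := by
        rw [lintegral_const_mul'' _ hmeas, mul_pow]
    _ ≤ ENNReal.ofReal z ^ 2 * (ENNReal.ofReal z * ∫⁻ s in Set.Ioc 0 z, ‖e s‖ₑ ^ 2) := by
        gcongr
        simpa using sq_lintegral_le _ hmeas
    _ = _ := by
        rw [← mul_assoc, ENNReal.ofReal_pow hz]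
        ring

theorem ShellProfile.continuous_fourier_shellFn {E : Type*} [NormedAddCommGroup E]
    [InnerProductSpace ℝ E] [FiniteDimensional ℝ E] [MeasurableSpace E] [BorelSpace E]
    {ψ : ℝ → ℂ} (hψ : ShellProfile ψ) (q : ℝ) : Continuous (𝓕 (shellFn q ψ : E → ℂ)) := by
  rw [← hψ.coe_toSchwartz_rpow_mul, ← SchwartzMap.fourier_coe]
  exact (𝓕 ((hψ.rpow_mul q).toSchwartz E)).continuous

namespace CoreProfile

variable {ψ : ℝ → ℂ}

theorem setLIntegral_shift (hψ : CoreProfile ψ) {s : ℝ} (hs : |s| ≤ 1 / 8) :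
    ∫⁻ r in Set.Ioi (0 : ℝ), ‖ψ (r - s)‖ₑ ^ 2 = ∫⁻ r, ‖ψ r‖ₑ ^ 2 := by
  rw [← lintegral_sub_right_eq_self (fun r => ‖ψ r‖ₑ ^ 2) s]
  refine setLIntegral_eq_of_support_subset fun r hr => ?_
  by_contra h
  refine hr ?_
  have h0 : ψ (r - s) = 0 := (hψ.shift hs).2 r fun h' => h (by
    have := h'.1
    simp only [Set.mem_Ioi]
    linarith)
  simp [h0]

theorem enorm_shellFn_sub_two_le {E : Type*} [NormedAddCommGroup E] (hψ : CoreProfile ψ) (p : ℝ) {s : ℝ} (hs : |s| ≤ 1 / 8) (x : E) :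
    ‖shellFn (p - 2) (fun r => ψ (r - s)) x‖ₑ ^ 2 ≤
      256 * ‖shellFn p (fun r => ψ (r - s)) x‖ₑ ^ 2 := by
  by_cases hx : ‖x‖ ∈ Set.Icc (1 / 4 : ℝ) 1
  · have hpos : 0 < ‖x‖ := by linarith [hx.1]
    have h1 : ‖shellFn (p - 2) (fun r => ψ (r - s)) x‖ₑ ≤
      16 * ‖shellFn p (fun r => ψ (r - s)) x‖ₑ := by
      rw [← ofReal_norm, ← ofReal_norm, ← ENNReal.ofReal_ofNat, ← ENNReal.ofReal_mul (by norm_num)]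
      refine ENNReal.ofReal_le_ofReal ?_
      rw [shellFn, shellFn, norm_mul, norm_mul, ← mul_assoc]
      refine mul_le_mul_of_nonneg_right ?_ (norm_nonneg _)
      rw [Complex.norm_real, Complex.norm_real, norm_of_nonneg (by positivity),
        norm_of_nonneg (by positivity), rpow_sub hpos, rpow_two, div_le_iff₀ (by positivity)]
      have : 1 ≤ 16 * ‖x‖ ^ 2 := by nlinarith [hx.1]
      nlinarith [rpow_nonneg (norm_nonneg x) p]
    calc _ ≤ (16 * ‖shellFn p (fun r => ψ (r - s)) x‖ₑ) ^ 2 := by gcongr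
      _ = _ := by rw [mul_pow]; norm_num
  · have h0 : ψ (‖x‖ - s) = 0 := (hψ.shift hs).2 _ hx
    simp [shellFn, h0]

variable {E : Type*} [NormedAddCommGroup E] [InnerProductSpace ℝ E] [FiniteDimensional ℝ E]
  [MeasurableSpace E] [BorelSpace E]

theorem lintegral_shellFn_shift [Nontrivial E] (hψ : CoreProfile ψ) {p : ℝ}
    (hp : (Module.finrank ℝ E : ℝ) - 1 = -2 * p) {s : ℝ} (hs : |s| ≤ 1 / 8) :
    ∫⁻ x : E, ‖shellFn p (fun r => ψ (r - s)) x‖ₑ ^ 2 =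
      (volume : Measure E).toSphere Set.univ * ∫⁻ r, ‖ψ r‖ₑ ^ 2 := by
  have hm : Measurable ψ := hψ.1.continuous.measurable
  rw [lintegral_enorm_shellFn_sq (by fun_prop) hp, hψ.setLIntegral_shift hs]

theorem lintegral_fourier_shellFn_sub_two_le [Nontrivial E] (hψ : CoreProfile ψ) {p : ℝ}
    (hp : (Module.finrank ℝ E : ℝ) - 1 = -2 * p) {s : ℝ} (hs : |s| ≤ 1 / 8) :
    ∫⁻ η : E, ‖𝓕 (shellFn (p - 2) (fun r => ψ (r - s)) : E → ℂ) η‖ₑ ^ 2 ≤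
      256 * ((volume : Measure E).toSphere Set.univ * ∫⁻ r, ‖ψ r‖ₑ ^ 2) := by
  rw [(hψ.shift hs).lintegral_fourier_shellFn, ← hψ.lintegral_shellFn_shift hp hs,
    ← lintegral_const_mul' _ _ (by simp)]
  exact lintegral_mono fun x => hψ.enorm_shellFn_sub_two_le p hs x

theorem lintegral_forcing_le [Nontrivial E] (hψ : CoreProfile ψ) {p : ℝ}
    (hp : (Module.finrank ℝ E : ℝ) - 1 = -2 * p) {s : ℝ} (hs : |s| ≤ 1 / 8) (κ : ℝ) :
    ∫⁻ η : E, ‖(κ : ℂ) * (𝓕 (shellFn (p - 2) (fun r => ψ (r - s)) : E → ℂ) η +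
        𝓕 (shellFn (p - 2) (fun r => ψ (r - -s)) : E → ℂ) η)‖ₑ ^ 2 ≤
      ENNReal.ofReal (1024 * κ ^ 2) *
        ((volume : Measure E).toSphere Set.univ * ∫⁻ r, ‖ψ r‖ₑ ^ 2) := by
  have b1 := hψ.lintegral_fourier_shellFn_sub_two_le (E := E) hp hs
  have b2 := hψ.lintegral_fourier_shellFn_sub_two_le (E := E) hp (s := -s) (by rwa [abs_neg])
  set m := (volume : Measure E).toSphere Set.univ * ∫⁻ r, ‖ψ r‖ₑ ^ 2
  have hm : Measurable (𝓕 (shellFn (p - 2) (fun r => ψ (r - s)) : E → ℂ)) :=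
    ((hψ.shift hs).continuous_fourier_shellFn (p - 2)).measurable
  set A : E → ℂ := 𝓕 (shellFn (p - 2) (fun r => ψ (r - s)) : E → ℂ)
  set B : E → ℂ := 𝓕 (shellFn (p - 2) (fun r => ψ (r - -s)) : E → ℂ)
  have hle : ∀ η, ‖(κ : ℂ) * (A η + B η)‖ₑ ^ 2 ≤
      ENNReal.ofReal (κ ^ 2) * (2 * ‖A η‖ₑ ^ 2 + 2 * ‖B η‖ₑ ^ 2) := by
    intro η
    rw [enorm_mul, mul_pow]
    have h1 : ‖(κ : ℂ)‖ₑ ^ 2 = ENNReal.ofReal (κ ^ 2) := by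
      rw [← ofReal_norm, Complex.norm_real, ← ENNReal.ofReal_pow (norm_nonneg _),
        Real.norm_eq_abs, sq_abs]
    rw [h1]
    exact mul_le_mul_right (enorm_add_sq_le _ _) _
  refine (lintegral_mono hle).trans ?_
  rw [lintegral_const_mul' _ _ (by simp), lintegral_add_left (by fun_prop),
    lintegral_const_mul' _ _ (by simp), lintegral_const_mul' _ _ (by simp)]
  calc _ ≤ ENNReal.ofReal (κ ^ 2) * (2 * (256 * m) + 2 * (256 * m)) := by
        exact mul_le_mul_right (add_le_add (mul_le_mul_right b1 _) (mul_le_mul_right b2 _)) _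
    _ = _ := by
        rw [ENNReal.ofReal_mul (by norm_num), ENNReal.ofReal_ofNat]
        ring

/-- In the radial half-wave evolution of the shell function `‖x‖ ^ p ψ(‖x‖)`, the shell splits into
an outgoing and an ingoing one, up to a controlled error. -/
theorem lintegral_fourier_shellFn_sub_cos_mul_le [Nontrivial E] (hψ : CoreProfile ψ) {p : ℝ}
    (hp : (Module.finrank ℝ E : ℝ) - 1 = -2 * p) {z : ℝ} (hz : 0 ≤ z) (hz8 : z < 1 / 8) :
    ∫⁻ η : E, ‖𝓕 (shellFn p (fun r => ψ (r - z)) : E → ℂ) η +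
        𝓕 (shellFn p (fun r => ψ (r - -z)) : E → ℂ) η -
        (cos (2 * π * ‖η‖ * z) : ℝ) * (2 * 𝓕 (shellFn p ψ : E → ℂ) η)‖ₑ ^ 2 ≤
      ENNReal.ofReal (1024 * (p * (p + 1)) ^ 2 * z ^ 4) *
        ((volume : Measure E).toSphere Set.univ * ∫⁻ r, ‖ψ r‖ₑ ^ 2) := by
  set m := (volume : Measure E).toSphere Set.univ * ∫⁻ r, ‖ψ r‖ₑ ^ 2
  set κ := p * (p + 1)
  set T : ℝ → (ℝ → ℂ) → ℝ → E → ℂ := fun q χ s η =>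
    𝓕 (shellFn q (fun r => χ (r - s)) : E → ℂ) η with hT
  set e : ℝ → E → ℂ := fun s η => κ * (T (p - 2) ψ s η + T (p - 2) ψ (-s) η) with he
  have hmem : ∀ s ∈ Set.Icc 0 z, s ∈ Set.Ioo (-1 / 8 : ℝ) (1 / 8) ∧
      -s ∈ Set.Ioo (-1 / 8 : ℝ) (1 / 8) := fun s hs =>
    ⟨⟨by linarith [hs.1], by linarith [hs.2]⟩, ⟨by linarith [hs.2], by linarith [hs.1]⟩⟩
  have habs : ∀ s ∈ Set.Ioo (-1 / 8 : ℝ) (1 / 8), |s| ≤ 1 / 8 := fun s hs =>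
    abs_le.2 ⟨by linarith [hs.1], by linarith [hs.2]⟩
  have hd : ∀ χ, CoreProfile χ → ∀ q η, ∀ s ∈ Set.Icc 0 z,
      HasDerivAt (fun s => T q χ s η) (-T q (deriv χ) s η) s ∧
      HasDerivAt (fun s => T q χ (-s) η) (T q (deriv χ) (-s) η) s := by
    intro χ hχ q η s hs
    refine ⟨hχ.hasDerivAt_fourier_shellFn q η (hmem s hs).1, ?_⟩
    have h1 := hχ.hasDerivAt_fourier_shellFn q η (hmem s hs).2
    have h2 := h1.scomp s (hasDerivAt_neg s)
    rw [neg_one_smul, neg_neg] at h2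
    exact h2
  have hmeasT : ∀ q, Measurable fun w : ℝ × E => T q ψ w.1 w.2 := fun q =>
    (hψ.stronglyMeasurable_fourier_shellFn q).measurable
  have hmeas : Measurable fun w : ℝ × E => e w.1 w.2 := by
    have h1 := hmeasT (p - 2)
    have h2 : Measurable fun w : ℝ × E => T (p - 2) ψ (-w.1) w.2 :=
      h1.comp (by fun_prop : Measurable fun w : ℝ × E => (-w.1, w.2))
    exact (h1.add h2).const_mul _
  have hpt : ∀ η : E, η ≠ 0 → ‖T p ψ z η + T p ψ (-z) η -
      (cos (2 * π * ‖η‖ * z) : ℝ) * (2 * 𝓕 (shellFn p ψ : E → ℂ) η)‖ₑ ^ 2 ≤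
      ENNReal.ofReal (z ^ 3) * ∫⁻ s in Set.Ioc 0 z, ‖e s η‖ₑ ^ 2 := by
    intro η hη
    have hk : 2 * π * ‖η‖ ≠ 0 := by
      have := norm_pos_iff.2 hη
      positivity
    have key := enorm_sub_cos_mul_sq_le (h := fun s => T p ψ s η + T p ψ (-s) η)
      (h' := fun s => -T p (deriv ψ) s η + T p (deriv ψ) (-s) η) (e := fun s => e s η) hk hz
      (fun s hs => (hd ψ hψ p η s hs).1.add (hd ψ hψ p η s hs).2) ?_ ?_ ?_
    · have h0 : T p ψ 0 η + T p ψ (-0) η = 2 * 𝓕 (shellFn p ψ : E → ℂ) η := by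
        simp only [hT, neg_zero, sub_zero]
        ring
      simpa only [h0] using key
    · intro s hs
      have h1 := (hd _ hψ.derivative p η s hs).1.fun_neg.fun_add (hd _ hψ.derivative p η s hs).2
      have h2 : ∀ s, |s| ≤ 1 / 8 → T p (deriv (deriv ψ)) s η =
          -((2 * π * ‖η‖) ^ 2 : ℝ) * T p ψ s η + (κ : ℝ) * T (p - 2) ψ s η := by
        intro s hs
        have := (hψ.shift hs).fourier_shellFn_deriv_deriv hp η
        rw [← this]
        simp only [hT]
        have e1 : deriv (fun r => ψ (r - s)) = fun r => deriv ψ (r - s) := by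
          funext r
          rw [deriv_comp_sub_const]
        have e2 : deriv (fun r => deriv ψ (r - s)) = fun r => deriv (deriv ψ) (r - s) := by
          funext r
          rw [deriv_comp_sub_const]
        rw [e1, e2]
      convert! h1 using 1
      rw [h2 s (habs _ (hmem s hs).1), h2 (-s) (habs _ (hmem s hs).2)]
      simp only [he]
      push_cast
      ring
    · simp
    · intro s hs
      have := hd ψ hψ (p - 2) η s hs
      exact ((this.1.continuousAt.add this.2.continuousAt).const_mul _).continuousWithinAt
  calc _ ≤ ∫⁻ η : E, ENNReal.ofReal (z ^ 3) * ∫⁻ s in Set.Ioc 0 z, ‖e s η‖ₑ ^ 2 := by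
        refine lintegral_mono_ae ?_
        filter_upwards [compl_mem_ae_iff.2 (measure_singleton (0 : E))] with η hη
        exact hpt η hη
    _ = ENNReal.ofReal (z ^ 3) * ∫⁻ s in Set.Ioc 0 z, ∫⁻ η, ‖e s η‖ₑ ^ 2 := by
        rw [lintegral_const_mul' _ _ (by simp), lintegral_lintegral_swap]
        exact ((hmeas.enorm.pow_const 2).comp measurable_swap).aemeasurable
    _ ≤ ENNReal.ofReal (z ^ 3) * ∫⁻ _ in Set.Ioc 0 z, ENNReal.ofReal (1024 * κ ^ 2) * m := by
        refine mul_le_mul_right (setLIntegral_mono' measurableSet_Ioc fun s hs => ?_) _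
        have hs1 := hmem s (Set.Ioc_subset_Icc_self hs)
        refine hψ.lintegral_forcing_le hp (habs _ hs1.1) κ
    _ = _ := by
        rw [setLIntegral_const, Real.volume_Ioc, sub_zero,
          show 1024 * κ ^ 2 * z ^ 4 = z ^ 3 * (1024 * κ ^ 2) * z by ring,
          ENNReal.ofReal_mul (p := z ^ 3 * (1024 * κ ^ 2)) (by positivity),
          ENNReal.ofReal_mul (p := z ^ 3) (by positivity)]
        ring

end CoreProfile

/-- A smooth cutoff to `[-1, 1]`, with a bound on its first two derivatives. -/
structure IsCutoff (φ : ℝ → ℝ) (M : ℝ) : Prop where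
  contDiff : ContDiff ℝ (⊤ : ℕ∞) φ
  eq_zero : ∀ u, 1 ≤ |u| → φ u = 0
  eq_one : ∀ u, |u| ≤ 1 / 2 → φ u = 1
  abs_deriv_le : ∀ u, |deriv φ u| ≤ M
  abs_deriv_deriv_le : ∀ u, |deriv (deriv φ) u| ≤ M

theorem exists_isCutoff : ∃ φ M, IsCutoff φ M := by
  let b : ContDiffBump (0 : ℝ) := ⟨1 / 2, 1, by norm_num, by norm_num⟩
  have hc : ContDiff ℝ (⊤ : ℕ∞) b := b.contDiff
  have h1 : ContDiff ℝ (⊤ : ℕ∞) (deriv b) := ContDiff.iterate_deriv 1 hc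
  have h2 : ContDiff ℝ (⊤ : ℕ∞) (deriv (deriv b)) := ContDiff.iterate_deriv 1 h1
  have hs := b.hasCompactSupport
  obtain ⟨M₁, hM₁⟩ := h1.continuous.bounded_above_of_compact_support hs.deriv
  obtain ⟨M₂, hM₂⟩ := h2.continuous.bounded_above_of_compact_support hs.deriv.deriv
  refine ⟨b, max M₁ M₂, hc, fun u hu => ?_, fun u hu => ?_, fun u => ?_, fun u => ?_⟩
  · exact b.zero_of_le_dist (by simpa using hu)
  · exact b.one_of_mem_closedBall (by rw [mem_closedBall_zero_iff]; exact hu)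
  · exact (hM₁ u).trans (le_max_left _ _)
  · exact (hM₂ u).trans (le_max_right _ _)

/-- The wave packet of frequency `N` localised at distance `1 / δ` from `1 / 2`. -/
def packet (φ : ℝ → ℝ) (δ N r : ℝ) : ℂ :=
  (φ (δ * (r - 1 / 2)) : ℂ) * Complex.exp (Complex.I * ((N * r : ℝ) : ℂ))

theorem norm_packet (φ : ℝ → ℝ) (δ N r : ℝ) : ‖packet φ δ N r‖ = |φ (δ * (r - 1 / 2))| := by
  rw [packet, norm_mul, mul_comm Complex.I, Complex.norm_exp_ofReal_mul_I, mul_one,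
    Complex.norm_real, Real.norm_eq_abs]

theorem contDiff_packet {φ : ℝ → ℝ} (hφ : ContDiff ℝ (⊤ : ℕ∞) φ) (δ N : ℝ) :
    ContDiff ℝ (⊤ : ℕ∞) (packet φ δ N) := by
  have h : ContDiff ℝ (⊤ : ℕ∞) fun r : ℝ => φ (δ * (r - 1 / 2)) := by fun_prop
  exact (Complex.ofRealCLM.contDiff.comp h).mul
    (Complex.contDiff_exp.comp (contDiff_const.mul
      (Complex.ofRealCLM.contDiff.comp (contDiff_const.mul contDiff_id))))

theorem deriv_packet {φ : ℝ → ℝ} (hφ : ContDiff ℝ (⊤ : ℕ∞) φ) (δ N r : ℝ) :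
    deriv (packet φ δ N) r =
      δ * packet (deriv φ) δ N r + Complex.I * N * packet φ δ N r := by
  have h1 : HasDerivAt (fun r : ℝ => δ * (r - 1 / 2)) δ r := by
    have := ((hasDerivAt_id r).sub_const (1 / 2)).const_mul δ
    rw [mul_one] at this
    exact this
  have h2 : HasDerivAt (fun r => ((φ (δ * (r - 1 / 2)) : ℝ) : ℂ))
      ((deriv φ (δ * (r - 1 / 2)) * δ : ℝ) : ℂ) r :=
    (((hφ.differentiable (by simp) _).hasDerivAt).comp r h1).ofReal_comp
  have h3 : HasDerivAt (fun r : ℝ => ((N * r : ℝ) : ℂ)) ((N : ℝ) : ℂ) r := by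
    have : HasDerivAt (fun r : ℝ => N * r) N r := by simpa using (hasDerivAt_id r).const_mul N
    exact this.ofReal_comp
  have := (h2.fun_mul (h3.const_mul Complex.I).cexp).deriv
  unfold packet
  rw [this]
  push_cast
  ring

theorem deriv_deriv_packet {φ : ℝ → ℝ} (hφ : ContDiff ℝ (⊤ : ℕ∞) φ) (δ N r : ℝ) :
    deriv (deriv (packet φ δ N)) r + (N ^ 2 : ℝ) * packet φ δ N r =
      δ ^ 2 * packet (deriv (deriv φ)) δ N r +
        2 * Complex.I * N * δ * packet (deriv φ) δ N r := by
  have h1 : ContDiff ℝ (⊤ : ℕ∞) (deriv φ) := ContDiff.iterate_deriv 1 hφ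
  have hd : ∀ χ : ℝ → ℝ, ContDiff ℝ (⊤ : ℕ∞) χ → DifferentiableAt ℝ (packet χ δ N) r := by
    intro χ hχ
    exact (contDiff_packet hχ δ N).differentiable (by simp) r
  have e : deriv (packet φ δ N) = fun r =>
      δ * packet (deriv φ) δ N r + Complex.I * N * packet φ δ N r := by
    funext r
    exact deriv_packet hφ δ N r
  rw [e, deriv_fun_add ((hd _ h1).const_mul _) ((hd _ hφ).const_mul _),
    deriv_const_mul _ (hd _ h1), deriv_const_mul _ (hd _ hφ), deriv_packet h1, deriv_packet hφ]
  push_cast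
  linear_combination (N : ℂ) ^ 2 * packet φ δ N r * Complex.I_sq

namespace IsCutoff

variable {φ : ℝ → ℝ} {M δ N : ℝ}

theorem deriv_eq_zero (hφ : IsCutoff φ M) {u : ℝ} (hu : 1 < |u|) :
    deriv φ u = 0 ∧ deriv (deriv φ) u = 0 := by
  have h0 : φ =ᶠ[nhds u] fun _ => 0 := by
    filter_upwards [(isOpen_lt continuous_const continuous_abs).mem_nhds hu] with v hv
    exact hφ.eq_zero v (le_of_lt hv)
  have h1 : deriv φ =ᶠ[nhds u] fun _ => 0 := by
    filter_upwards [h0.eventually_nhds] with v hv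
    rw [Filter.EventuallyEq.deriv_eq hv, deriv_const]
  exact ⟨h1.eq_of_nhds, by rw [h1.deriv_eq, deriv_const]⟩

theorem packet_eq_zero (hφ : IsCutoff φ M) (hδ : 0 < δ) {r : ℝ} (hr : 1 / δ ≤ |r - 1 / 2|) :
    packet φ δ N r = 0 := by
  rw [packet, hφ.eq_zero, Complex.ofReal_zero, zero_mul]
  rw [abs_mul, abs_of_pos hδ]
  rwa [div_le_iff₀' hδ] at hr

theorem coreProfile_packet (hφ : IsCutoff φ M) (hδ : 8 ≤ δ) : CoreProfile (packet φ δ N) := by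
  refine ⟨?_, fun r hr => hφ.packet_eq_zero (by linarith) ?_⟩
  · exact contDiff_packet hφ.contDiff δ N
  · have h8 : 1 / δ ≤ 1 / 8 := one_div_le_one_div_of_le (by norm_num) hδ
    refine h8.trans ?_
    by_contra h
    rw [not_le, abs_lt] at h
    exact hr ⟨by linarith [h.1], by linarith [h.2]⟩

theorem le_lintegral_packet (hφ : IsCutoff φ M) (hδ : 0 < δ) :
    ENNReal.ofReal (1 / δ) ≤ ∫⁻ r, ‖packet φ δ N r‖ₑ ^ 2 := by
  set S := Set.Icc (1 / 2 - 1 / (2 * δ)) (1 / 2 + 1 / (2 * δ))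
  calc ENNReal.ofReal (1 / δ) = ∫⁻ _ in S, 1 := by
        rw [setLIntegral_const, Real.volume_Icc, one_mul]
        congr 1
        field_simp
        ring
    _ ≤ ∫⁻ r in S, ‖packet φ δ N r‖ₑ ^ 2 := by
        refine setLIntegral_mono' measurableSet_Icc fun r hr => ?_
        have : |r - 1 / 2| ≤ 1 / (2 * δ) := abs_le.2 ⟨by linarith [hr.1], by linarith [hr.2]⟩
        rw [← ofReal_norm, norm_packet, hφ.eq_one]
        · simp
        · rw [abs_mul, abs_of_pos hδ]
          calc δ * |r - 1 / 2| ≤ δ * (1 / (2 * δ)) := by gcongr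
            _ = 1 / 2 := by field_simp
    _ ≤ _ := setLIntegral_le_lintegral _ _

theorem lintegral_deriv_deriv_packet_le (hφ : IsCutoff φ M) (hδ : 0 < δ) (hN : δ ≤ N) :
    ∫⁻ r, ‖deriv (deriv (packet φ δ N)) r + (N ^ 2 : ℝ) * packet φ δ N r‖ₑ ^ 2 ≤
      ENNReal.ofReal (18 * M ^ 2 * N ^ 2 * δ ^ 2) * ∫⁻ r, ‖packet φ δ N r‖ₑ ^ 2 := by
  have hM : 0 ≤ M := (abs_nonneg _).trans (hφ.abs_deriv_le 0)
  set S := Set.Icc (1 / 2 - 1 / δ) (1 / 2 + 1 / δ)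
  have hpt : ∀ r, ‖deriv (deriv (packet φ δ N)) r + (N ^ 2 : ℝ) * packet φ δ N r‖ₑ ^ 2 ≤
      S.indicator (fun _ => ENNReal.ofReal ((3 * M * N * δ) ^ 2)) r := by
    intro r
    rw [deriv_deriv_packet hφ.contDiff]
    by_cases hr : r ∈ S
    · rw [Set.indicator_of_mem hr, ← ofReal_norm, ← ENNReal.ofReal_pow (norm_nonneg _)]
      refine ENNReal.ofReal_le_ofReal (pow_le_pow_left₀ (norm_nonneg _) ?_ 2)
      refine (norm_add_le _ _).trans ?_
      simp only [norm_mul, norm_packet, norm_pow, Complex.norm_real, Complex.norm_I,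
        Complex.norm_ofNat, Real.norm_eq_abs, mul_one, abs_of_pos hδ,
        abs_of_pos (hδ.trans_le hN)]
      have h1 := hφ.abs_deriv_le (δ * (r - 1 / 2))
      have h2 := hφ.abs_deriv_deriv_le (δ * (r - 1 / 2))
      have hN0 : 0 < N := hδ.trans_le hN
      calc _ ≤ δ ^ 2 * M + 2 * N * δ * M := by gcongr
        _ ≤ 3 * M * N * δ := by nlinarith [mul_nonneg hM hδ.le]
    · have : 1 < |δ * (r - 1 / 2)| := by
        rw [abs_mul, abs_of_pos hδ, ← div_lt_iff₀' hδ]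
        by_contra h
        rw [not_lt, abs_le] at h
        exact hr ⟨by linarith [h.1], by linarith [h.2]⟩
      have h0 := hφ.deriv_eq_zero this
      have h1 : packet (deriv φ) δ N r = 0 := by rw [packet, h0.1]; simp
      have h2 : packet (deriv (deriv φ)) δ N r = 0 := by rw [packet, h0.2]; simp
      simp [h1, h2]
  calc _ ≤ ∫⁻ r, S.indicator (fun _ => ENNReal.ofReal ((3 * M * N * δ) ^ 2)) r :=
        lintegral_mono hpt
    _ = ENNReal.ofReal (18 * M ^ 2 * N ^ 2 * δ ^ 2) * ENNReal.ofReal (1 / δ) := by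
        rw [lintegral_indicator measurableSet_Icc, setLIntegral_const, Real.volume_Icc,
          ← ENNReal.ofReal_mul (by positivity), ← ENNReal.ofReal_mul (by positivity)]
        congr 1
        ring
    _ ≤ _ := by
        gcongr
        exact hφ.le_lintegral_packet hδ

variable {E : Type*} [NormedAddCommGroup E] [InnerProductSpace ℝ E] [FiniteDimensional ℝ E]
  [MeasurableSpace E] [BorelSpace E]

/-- The packet is concentrated near frequencies of size `N`. -/
theorem lintegral_freq_le [Nontrivial E] (hφ : IsCutoff φ M) (hδ : 8 ≤ δ) (hN : δ ≤ N) {p : ℝ}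
    (hp : (Module.finrank ℝ E : ℝ) - 1 = -2 * p) :
    ∫⁻ η : E, ‖(((2 * π * ‖η‖) ^ 2 - N ^ 2 : ℝ) : ℂ) *
        𝓕 (shellFn p (packet φ δ N) : E → ℂ) η‖ₑ ^ 2 ≤
      ENNReal.ofReal ((512 * (p * (p + 1)) ^ 2 + 36 * M ^ 2) * N ^ 2 * δ ^ 2) *
        ((volume : Measure E).toSphere Set.univ * ∫⁻ r, ‖packet φ δ N r‖ₑ ^ 2) := by
  set ψ := packet φ δ N with hψdef
  have hψ : CoreProfile ψ := hφ.coreProfile_packet hδ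
  set κ := p * (p + 1)
  have hχ : CoreProfile fun r => deriv (deriv ψ) r + (N ^ 2 : ℝ) * ψ r :=
    ⟨hψ.derivative.derivative.1.add (contDiff_const.mul hψ.1), fun r hr => by
      simp [hψ.2 r hr, hψ.derivative.derivative.2 r hr]⟩
  have b1 := hψ.lintegral_fourier_shellFn_sub_two_le (E := E) hp (s := 0) (by norm_num)
  have b2 := hχ.lintegral_shellFn_shift (E := E) hp (s := 0) (by norm_num)
  simp only [sub_zero] at b1 b2
  rw [← hχ.shellProfile.lintegral_fourier_shellFn] at b2
  have b3 := hφ.lintegral_deriv_deriv_packet_le (by linarith) hN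
  set σ := (volume : Measure E).toSphere Set.univ
  set m := ∫⁻ r, ‖ψ r‖ₑ ^ 2
  have hadd : ∀ η : E, 𝓕 (shellFn p (fun r => deriv (deriv ψ) r + (N ^ 2 : ℝ) * ψ r) : E → ℂ) η =
      𝓕 (shellFn p (deriv (deriv ψ)) : E → ℂ) η + (N ^ 2 : ℝ) * 𝓕 (shellFn p ψ : E → ℂ) η := by
    intro η
    have key : (hχ.shellProfile.rpow_mul p).toSchwartz E =
        (hψ.derivative.derivative.shellProfile.rpow_mul p).toSchwartz E +
          ((N ^ 2 : ℝ) : ℂ) • (hψ.shellProfile.rpow_mul p).toSchwartz E := by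
      ext x
      rw [add_apply, smul_apply]
      simp only [ShellProfile.toSchwartz_apply, smul_eq_mul]
      ring
    have := congrArg (fun F : SchwartzMap E ℂ => (𝓕 F) η) key
    simp only [FourierTransform.fourier_add, FourierTransform.fourier_smul] at this
    rw [add_apply, smul_apply] at this
    simp only [SchwartzMap.fourier_coe, smul_eq_mul] at this
    exact this
  have hid : ∀ η : E, (((2 * π * ‖η‖) ^ 2 - N ^ 2 : ℝ) : ℂ) * 𝓕 (shellFn p ψ : E → ℂ) η =
      (κ : ℂ) * 𝓕 (shellFn (p - 2) ψ : E → ℂ) η +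
        -𝓕 (shellFn p (fun r => deriv (deriv ψ) r + (N ^ 2 : ℝ) * ψ r) : E → ℂ) η := by
    intro η
    rw [hadd, hψ.shellProfile.fourier_shellFn_deriv_deriv hp]
    simp only [κ]
    push_cast
    ring
  have hκ : ‖(κ : ℂ)‖ₑ ^ 2 = ENNReal.ofReal (κ ^ 2) := by
    rw [← ofReal_norm, Complex.norm_real, ← ENNReal.ofReal_pow (norm_nonneg _),
      Real.norm_eq_abs, sq_abs]
  have hm := (hψ.shellProfile.continuous_fourier_shellFn (E := E) (p - 2)).measurable
  have hle : ∀ η : E, ‖(((2 * π * ‖η‖) ^ 2 - N ^ 2 : ℝ) : ℂ) * 𝓕 (shellFn p ψ : E → ℂ) η‖ₑ ^ 2 ≤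
      2 * (ENNReal.ofReal (κ ^ 2) * ‖𝓕 (shellFn (p - 2) ψ : E → ℂ) η‖ₑ ^ 2) +
        2 * ‖𝓕 (shellFn p (fun r => deriv (deriv ψ) r + (N ^ 2 : ℝ) * ψ r) : E → ℂ) η‖ₑ ^ 2 := by
    intro η
    rw [hid]
    refine (enorm_add_sq_le _ _).trans_eq ?_
    rw [enorm_mul, mul_pow, enorm_neg, hκ]
  refine (lintegral_mono hle).trans ?_
  rw [lintegral_add_left (by fun_prop), lintegral_const_mul' _ _ (by simp),
    lintegral_const_mul' _ _ (by simp), lintegral_const_mul' _ _ (by simp), b2]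
  calc _ ≤ 2 * (ENNReal.ofReal (κ ^ 2) * (256 * (σ * m))) +
        2 * (σ * (ENNReal.ofReal (18 * M ^ 2 * N ^ 2 * δ ^ 2) * m)) :=
        add_le_add (mul_le_mul_right (mul_le_mul_right b1 _) _)
          (mul_le_mul_right (mul_le_mul_right b3 _) _)
    _ = ENNReal.ofReal (512 * κ ^ 2 + 36 * M ^ 2 * N ^ 2 * δ ^ 2) * (σ * m) := by
        rw [ENNReal.ofReal_add (by positivity) (by positivity),
          show 36 * M ^ 2 * N ^ 2 * δ ^ 2 = 2 * (18 * M ^ 2 * N ^ 2 * δ ^ 2) by ring,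
          ENNReal.ofReal_mul (p := 512) (by norm_num), ENNReal.ofReal_mul (p := 2) (by norm_num),
          ENNReal.ofReal_ofNat, ENNReal.ofReal_ofNat]
        ring
    _ ≤ _ := by
        refine mul_le_mul_left (ENNReal.ofReal_le_ofReal ?_) _
        have h1 : 1 ≤ N ^ 2 * δ ^ 2 := by nlinarith [mul_self_nonneg (N * δ - 1), mul_le_mul hN hδ (by norm_num) (by linarith)]
        nlinarith [sq_nonneg κ]

end IsCutoff

theorem abs_rpow_sub_one_sub_le {a x : ℝ} (ha : 0 < a) (ha1 : a < 1) (hx : 0 ≤ x) :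
    |x ^ a - 1 - a * (x - 1)| ≤ (x - 1) ^ 2 := by
  have h1 : x ^ a ≤ 1 + a * (x - 1) := by
    have := rpow_one_add_le_one_add_mul_self (s := x - 1) (by linarith) ha.le ha1.le
    simpa using this
  have h2 : x ^ (1 - a) ≤ 1 + (1 - a) * (x - 1) := by
    have := rpow_one_add_le_one_add_mul_self (s := x - 1) (p := 1 - a) (by linarith)
      (by linarith) (by linarith)
    simpa using this
  rw [abs_of_nonpos (by linarith)]
  rcases hx.eq_or_lt with rfl | hx0
  · rw [Real.zero_rpow ha.ne']
    linarith
  · have h3 : x ^ a * x ^ (1 - a) = x := by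
      rw [← Real.rpow_add hx0]
      simp
    have hp : 0 < x ^ a := Real.rpow_pos_of_pos hx0 a
    have hb : a ≤ 1 + (1 - a) * (x - 1) := by nlinarith
    have h4 : x ≤ x ^ a * (1 + (1 - a) * (x - 1)) := by
      calc x = x ^ a * x ^ (1 - a) := h3.symm
        _ ≤ _ := by gcongr
    have hbp : 0 < 1 + (1 - a) * (x - 1) := ha.trans_le hb
    have h5 : (1 + a * (x - 1) - (x - 1) ^ 2) * (1 + (1 - a) * (x - 1)) ≤ x := by
      have : 0 ≤ (x - 1) ^ 2 * (1 + (1 - a) * (x - 1) - a * (1 - a)) := by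
        refine mul_nonneg (sq_nonneg _) ?_
        nlinarith
      nlinarith
    have h6 : 1 + a * (x - 1) - (x - 1) ^ 2 ≤ x ^ a :=
      le_of_mul_le_mul_right (h5.trans h4) hbp
    linarith

theorem norm_exp_I_sub_exp_I_sq_le (u v : ℝ) :
    ‖Complex.exp (Complex.I * (u : ℂ)) - Complex.exp (Complex.I * (v : ℂ))‖ ^ 2 ≤
      2 * |u - v| := by
  have h1 : ∀ u : ℝ, ‖Complex.exp (Complex.I * (u : ℂ))‖ = 1 := fun u => by
    rw [mul_comm, Complex.norm_exp_ofReal_mul_I]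
  have h2 : ‖Complex.exp (Complex.I * (u : ℂ)) - Complex.exp (Complex.I * (v : ℂ))‖ ≤ 2 := by
    refine (norm_sub_le _ _).trans ?_
    rw [h1, h1]
    norm_num
  have h3 : ‖Complex.exp (Complex.I * (u : ℂ)) - Complex.exp (Complex.I * (v : ℂ))‖ ≤ |u - v| := by
    have e : Complex.exp (Complex.I * (u : ℂ)) - Complex.exp (Complex.I * (v : ℂ)) =
        Complex.exp (Complex.I * (v : ℂ)) * (Complex.exp (Complex.I * ((u - v : ℝ) : ℂ)) - 1) := by
      rw [mul_sub, ← Complex.exp_add, mul_one]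
      push_cast
      ring_nf
    rw [e, norm_mul, h1, one_mul]
    exact Real.norm_exp_I_mul_ofReal_sub_one_le
  nlinarith [norm_nonneg (Complex.exp (Complex.I * (u : ℂ)) - Complex.exp (Complex.I * (v : ℂ))),
    abs_nonneg (u - v)]

/-- Near frequency `N` the phase `t k ^ a` is linear up to a small error. -/
theorem norm_exp_phase_sub_sq_le {a N k t : ℝ} (ha : 0 < a) (ha1 : a < 1) (hN : 0 < N)
    (hk : 0 ≤ k) (ht : |t| ≤ 1) :
    ‖Complex.exp (Complex.I * ((t * k ^ a - a * N ^ (a - 1) * t * k : ℝ) : ℂ)) -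
        Complex.exp (Complex.I * ((t * (N ^ a - a * N ^ a) : ℝ) : ℂ))‖ ^ 2 ≤
      2 * (N ^ (a - 4) * (k ^ 2 - N ^ 2) ^ 2) := by
  refine (norm_exp_I_sub_exp_I_sq_le _ _).trans ?_
  have h1 := abs_rpow_sub_one_sub_le ha ha1 (div_nonneg hk hN.le)
  have hNa : 0 < N ^ a := Real.rpow_pos_of_pos hN a
  have e1 : N ^ (a - 1) = N ^ a / N := Real.rpow_sub_one hN.ne' a
  have e2 : N ^ (a - 4) = N ^ a / N ^ 4 := by
    rw [Real.rpow_sub hN]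
    norm_cast
  have e3 : t * k ^ a - a * N ^ (a - 1) * t * k - t * (N ^ a - a * N ^ a) =
      t * (N ^ a * ((k / N) ^ a - 1 - a * (k / N - 1))) := by
    rw [e1, Real.div_rpow hk hN.le]
    field_simp
    ring
  rw [e3, abs_mul, abs_mul, abs_of_pos hNa, e2]
  have h2 : (k / N - 1) ^ 2 ≤ (k ^ 2 - N ^ 2) ^ 2 / N ^ 4 := by
    rw [show k / N - 1 = (k - N) / N by field_simp, div_pow, div_le_div_iff₀ (by positivity)
      (by positivity)]
    have : (k ^ 2 - N ^ 2) ^ 2 = (k - N) ^ 2 * (k + N) ^ 2 := by ring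
    rw [this, show N ^ 4 = N ^ 2 * N ^ 2 by ring, ← mul_assoc]
    have h : N ^ 2 ≤ (k + N) ^ 2 := by nlinarith
    gcongr
  calc 2 * (|t| * (N ^ a * |(k / N) ^ a - 1 - a * (k / N - 1)|))
      ≤ 2 * (1 * (N ^ a * ((k ^ 2 - N ^ 2) ^ 2 / N ^ 4))) := by
        gcongr
        exact h1.trans h2
    _ = _ := by ring

theorem continuous_phase {E : Type*} [NormedAddCommGroup E] {a : ℝ} (ha : 0 < a) :
    Continuous fun w : (ℝ × ℝ) × E => Complex.exp (Complex.I *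
      ((w.1.1 * (2 * π * ‖w.2‖) + w.1.2 * (2 * π * ‖w.2‖) ^ a : ℝ) : ℂ)) := by
  have : Continuous fun w : (ℝ × ℝ) × E => (2 * π * ‖w.2‖) ^ a :=
    (by fun_prop : Continuous fun w : (ℝ × ℝ) × E => 2 * π * ‖w.2‖).rpow_const
      fun _ => Or.inr ha.le
  fun_prop

section Wave

variable {E : Type*} [NormedAddCommGroup E] [InnerProductSpace ℝ E] [FiniteDimensional ℝ E]
  [MeasurableSpace E] [BorelSpace E]

theorem fourierInv_add_apply {f g : E → ℂ} (hf : Integrable f) (hg : Integrable g) (x : E) :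
    𝓕⁻ (fun η => f η + g η) x = 𝓕⁻ f x + 𝓕⁻ g x := by
  simp only [Real.fourierInv_eq_fourier_neg, Real.fourier_eq, smul_add]
  exact integral_add ((Real.fourierIntegral_convergent_iff _).2 hf)
    ((Real.fourierIntegral_convergent_iff _).2 hg)

theorem fourierInv_const_mul_apply (c : ℂ) (f : E → ℂ) (x : E) :
    𝓕⁻ (fun η => c * f η) x = c * 𝓕⁻ f x := by
  simp only [Real.fourierInv_eq_fourier_neg, Real.fourier_eq, ← smul_eq_mul]
  rw [← integral_smul]
  congr 1 with v
  rw [smul_comm]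

/-- The half-wave evolution at time `y`, composed with the dispersive evolution at time `t`, of the
function with Fourier transform `F`. -/
def waveEvol (a : ℝ) (F : E → ℂ) (y t : ℝ) (x : E) : ℂ :=
  𝓕⁻ (fun η => Complex.exp (Complex.I *
    ((y * (2 * π * ‖η‖) + t * (2 * π * ‖η‖) ^ a : ℝ) : ℂ)) * F η) x

theorem integrable_phase_mul {a : ℝ} (ha : 0 < a) {F : E → ℂ} (hF : Integrable F) (y t : ℝ) :
    Integrable fun η => Complex.exp (Complex.I *
      ((y * (2 * π * ‖η‖) + t * (2 * π * ‖η‖) ^ a : ℝ) : ℂ)) * F η := by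
  have hc := (continuous_phase (E := E) ha).comp (by fun_prop : Continuous fun η : E => ((y, t), η))
  refine hF.mono (hc.aestronglyMeasurable.mul hF.1) (.of_forall fun η => ?_)
  rw [norm_mul, mul_comm Complex.I, Complex.norm_exp_ofReal_mul_I, one_mul]

theorem memLp_phase_mul {a : ℝ} (ha : 0 < a) {F : E → ℂ} (hF : MemLp F 2) (y t : ℝ) :
    MemLp (fun η => Complex.exp (Complex.I *
      ((y * (2 * π * ‖η‖) + t * (2 * π * ‖η‖) ^ a : ℝ) : ℂ)) * F η) 2 := by
  have hc := (continuous_phase (E := E) ha).comp (by fun_prop : Continuous fun η : E => ((y, t), η))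
  refine hF.of_le (hc.aestronglyMeasurable.mul hF.1) (.of_forall fun η => ?_)
  rw [norm_mul, mul_comm Complex.I, Complex.norm_exp_ofReal_mul_I, one_mul]

theorem norm_waveEvol_le (a : ℝ) (F : E → ℂ) (y t : ℝ) (x : E) :
    ‖waveEvol a F y t x‖ ≤ ∫ η, ‖F η‖ := by
  rw [waveEvol, Real.fourierInv_eq]
  refine (norm_integral_le_integral_norm _).trans_eq ?_
  congr 1 with η
  rw [Circle.norm_smul, norm_mul, mul_comm Complex.I, Complex.norm_exp_ofReal_mul_I, one_mul]

theorem continuous_waveEvol {a : ℝ} (ha : 0 < a) {F : E → ℂ} (hF : Integrable F) :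
    Continuous fun w : (ℝ × ℝ) × E => waveEvol a F w.1.1 w.1.2 w.2 := by
  simp only [waveEvol, Real.fourierInv_eq]
  refine continuous_of_dominated (bound := fun η => ‖F η‖) (fun w => ?_) (fun w => ?_) hF.norm ?_
  · have := integrable_phase_mul ha hF w.1.1 w.1.2
    have hc : Continuous fun v : E => Real.fourierChar ⟪v, w.2⟫_ℝ := by fun_prop
    simp only [Circle.smul_def]
    exact ((continuous_subtype_val.comp hc).aestronglyMeasurable).smul this.1
  · refine .of_forall fun η => ?_
    rw [Circle.norm_smul, norm_mul, mul_comm Complex.I, Complex.norm_exp_ofReal_mul_I, one_mul]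
  · refine .of_forall fun η => ?_
    have hc := (continuous_phase (E := E) ha).comp
      (by fun_prop : Continuous fun w : (ℝ × ℝ) × E => (w.1, η))
    simp only [Circle.smul_def]
    have hc2 : Continuous fun w : (ℝ × ℝ) × E => Real.fourierChar ⟪η, w.2⟫_ℝ := by fun_prop
    exact (continuous_subtype_val.comp hc2).smul (hc.mul continuous_const)

end Wave

section MassBound

variable {E : Type*} [NormedAddCommGroup E] [InnerProductSpace ℝ E] [FiniteDimensional ℝ E]
  [MeasurableSpace E] [BorelSpace E]

namespace ShellProfile

variable {ψ : ℝ → ℂ}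

theorem integrable_fourier_shellFn (hψ : ShellProfile ψ) (q : ℝ) :
    Integrable (𝓕 (shellFn q ψ : E → ℂ)) := by
  rw [← hψ.coe_toSchwartz_rpow_mul, ← SchwartzMap.fourier_coe]
  exact SchwartzMap.integrable _

theorem memLp_fourier_shellFn (hψ : ShellProfile ψ) (q : ℝ) :
    MemLp (𝓕 (shellFn q ψ : E → ℂ)) 2 := by
  rw [← hψ.coe_toSchwartz_rpow_mul, ← SchwartzMap.fourier_coe]
  exact SchwartzMap.memLp _ 2 volume

theorem fourierInv_fourier_shellFn (hψ : ShellProfile ψ) (q : ℝ) (x : E) :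
    𝓕⁻ (𝓕 (shellFn q ψ : E → ℂ)) x = shellFn q ψ x := by
  rw [← hψ.coe_toSchwartz_rpow_mul, ← SchwartzMap.fourier_coe, ← SchwartzMap.fourierInv_coe,
    FourierTransform.fourierInv_fourier_eq]

end ShellProfile

theorem exp_phase_add (k z τ u : ℝ) :
    Complex.exp (Complex.I * (((z - τ) * k + u : ℝ) : ℂ)) +
        Complex.exp (Complex.I * (((-z - τ) * k + u : ℝ) : ℂ)) =
      (cos (k * z) : ℝ) * 2 * Complex.exp (Complex.I * ((u - τ * k : ℝ) : ℂ)) := by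
  have h := Complex.two_cos (x := ((k * z : ℝ) : ℂ))
  rw [Complex.ofReal_cos, mul_comm (Complex.cos _), h, add_mul, ← Complex.exp_add,
    ← Complex.exp_add]
  push_cast
  ring_nf

namespace IsCutoff

variable {φ : ℝ → ℝ} {M δ N : ℝ}

/-- The sum of two evolved packets is close to the explicit travelling packets. -/
theorem lintegral_waveEvol_error_le [Nontrivial E] (hφ : IsCutoff φ M) (hδ : 8 ≤ δ) (hN : δ ≤ N)
    {p : ℝ} (hp : (Module.finrank ℝ E : ℝ) - 1 = -2 * p) {a : ℝ} (ha : 0 < a) (ha1 : a < 1)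
    {z t : ℝ} (hz : 0 ≤ z) (hz8 : z < 1 / 8) (ht : |t| ≤ 1) :
    ∫⁻ x : E, ‖waveEvol a (𝓕 (shellFn p (packet φ δ N) : E → ℂ)) (z - a * N ^ (a - 1) * t) t x +
        waveEvol a (𝓕 (shellFn p (packet φ δ N) : E → ℂ)) (-z - a * N ^ (a - 1) * t) t x -
        Complex.exp (Complex.I * ((t * (N ^ a - a * N ^ a) : ℝ) : ℂ)) *
          (shellFn p (fun r => packet φ δ N (r - z)) x +
            shellFn p (fun r => packet φ δ N (r - -z)) x)‖ₑ ^ 2 ≤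
      ENNReal.ofReal (16 * (512 * (p * (p + 1)) ^ 2 + 36 * M ^ 2) * (N ^ (a - 2) * δ ^ 2) +
          2048 * (p * (p + 1)) ^ 2 * z ^ 4) *
        ((volume : Measure E).toSphere Set.univ * ∫⁻ r, ‖packet φ δ N r‖ₑ ^ 2) := by
  have hψ : CoreProfile (packet φ δ N) := hφ.coreProfile_packet hδ
  have hN0 : 0 < N := by linarith
  have hfreq := hφ.lintegral_freq_le (E := E) hδ hN hp
  have hcos := hψ.lintegral_fourier_shellFn_sub_cos_mul_le (E := E) hp hz hz8
  have hs1 : ShellProfile fun r => packet φ δ N (r - z) :=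
    hψ.shift (by rw [abs_of_nonneg hz]; exact hz8.le)
  have hs2 : ShellProfile fun r => packet φ δ N (r - -z) :=
    hψ.shift (by rw [abs_neg, abs_of_nonneg hz]; exact hz8.le)
  have i0 := hψ.shellProfile.integrable_fourier_shellFn (E := E) p
  have i1 := hs1.integrable_fourier_shellFn (E := E) p
  have i2 := hs2.integrable_fourier_shellFn (E := E) p
  have l0 := hψ.shellProfile.memLp_fourier_shellFn (E := E) p
  have l1 := hs1.memLp_fourier_shellFn (E := E) p
  have l2 := hs2.memLp_fourier_shellFn (E := E) p
  have v1 := hs1.fourierInv_fourier_shellFn (E := E) p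
  have v2 := hs2.fourierInv_fourier_shellFn (E := E) p
  have c0 := hψ.shellProfile.continuous_fourier_shellFn (E := E) p
  simp only [← v1, ← v2]
  clear v1 v2
  generalize 𝓕 (shellFn p (packet φ δ N) : E → ℂ) = F at *
  generalize 𝓕 (shellFn p (fun r => packet φ δ N (r - z)) : E → ℂ) = G₁ at *
  generalize 𝓕 (shellFn p (fun r => packet φ δ N (r - -z)) : E → ℂ) = G₂ at *
  set τ := a * N ^ (a - 1) * t with hτ
  set w := Complex.exp (Complex.I * ((t * (N ^ a - a * N ^ a) : ℝ) : ℂ)) with hw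
  have hw1 : ‖w‖ = 1 := by rw [hw, mul_comm, Complex.norm_exp_ofReal_mul_I]
  set m := (volume : Measure E).toSphere Set.univ * ∫⁻ r, ‖packet φ δ N r‖ₑ ^ 2
  have hphase : ∀ y, Integrable fun η => Complex.exp (Complex.I *
      ((y * (2 * π * ‖η‖) + t * (2 * π * ‖η‖) ^ a : ℝ) : ℂ)) * F η :=
    fun y => integrable_phase_mul ha i0 y t
  have hphase2 : ∀ y, MemLp (fun η => Complex.exp (Complex.I *
      ((y * (2 * π * ‖η‖) + t * (2 * π * ‖η‖) ^ a : ℝ) : ℂ)) * F η) 2 :=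
    fun y => memLp_phase_mul ha l0 y t
  have hsum : Integrable fun η => Complex.exp (Complex.I *
      (((z - τ) * (2 * π * ‖η‖) + t * (2 * π * ‖η‖) ^ a : ℝ) : ℂ)) * F η + Complex.exp (Complex.I *
      (((-z - τ) * (2 * π * ‖η‖) + t * (2 * π * ‖η‖) ^ a : ℝ) : ℂ)) * F η :=
    (hphase _).add (hphase _)
  have hG : Integrable fun η => -w * (G₁ η + G₂ η) := (i1.add i2).const_mul _
  have e1 : ∀ x, waveEvol a F (z - τ) t x + waveEvol a F (-z - τ) t x -
      w * (𝓕⁻ G₁ x + 𝓕⁻ G₂ x) = 𝓕⁻ (fun η => (Complex.exp (Complex.I *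
      (((z - τ) * (2 * π * ‖η‖) + t * (2 * π * ‖η‖) ^ a : ℝ) : ℂ)) * F η + Complex.exp (Complex.I *
      (((-z - τ) * (2 * π * ‖η‖) + t * (2 * π * ‖η‖) ^ a : ℝ) : ℂ)) * F η) +
      -w * (G₁ η + G₂ η)) x := by
    intro x
    rw [fourierInv_add_apply hsum hG,
      fourierInv_add_apply (hphase _) (hphase _), fourierInv_const_mul_apply,
      fourierInv_add_apply i1 i2, waveEvol, waveEvol]
    ring
  simp only [e1]
  refine (lintegral_enorm_fourierInv_sq (hsum.add hG)
    (((hphase2 _).add (hphase2 _)).add ((l1.add l2).const_mul _))).trans_le ?_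
  simp only [Pi.add_apply]
  have hpt : ∀ η : E, ‖(Complex.exp (Complex.I *
      (((z - τ) * (2 * π * ‖η‖) + t * (2 * π * ‖η‖) ^ a : ℝ) : ℂ)) * F η + Complex.exp (Complex.I *
      (((-z - τ) * (2 * π * ‖η‖) + t * (2 * π * ‖η‖) ^ a : ℝ) : ℂ)) * F η) +
      -w * (G₁ η + G₂ η)‖ₑ ^ 2 ≤
      2 * (ENNReal.ofReal (8 * N ^ (a - 4)) *
        ‖(((2 * π * ‖η‖) ^ 2 - N ^ 2 : ℝ) : ℂ) * F η‖ₑ ^ 2) +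
      2 * ‖G₁ η + G₂ η - (cos (2 * π * ‖η‖ * z) : ℝ) * (2 * F η)‖ₑ ^ 2 := by
    intro η
    have hk : 0 ≤ 2 * π * ‖η‖ := by positivity
    generalize 2 * π * ‖η‖ = k at *
    have e : (Complex.exp (Complex.I * (((z - τ) * k + t * k ^ a : ℝ) : ℂ)) * F η +
        Complex.exp (Complex.I * (((-z - τ) * k + t * k ^ a : ℝ) : ℂ)) * F η) +
        -w * (G₁ η + G₂ η) =
        (cos (k * z) : ℝ) * 2 *
          (Complex.exp (Complex.I * ((t * k ^ a - τ * k : ℝ) : ℂ)) - w) * F η +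
          -w * (G₁ η + G₂ η - (cos (k * z) : ℝ) * (2 * F η)) := by
      linear_combination F η * exp_phase_add k z τ (t * k ^ a)
    rw [e]
    refine (enorm_add_sq_le _ _).trans (add_le_add (mul_le_mul_right ?_ _) (mul_le_mul_right ?_ _))
    · rw [← ofReal_norm, ← ofReal_norm, ← ENNReal.ofReal_pow (norm_nonneg _),
        ← ENNReal.ofReal_pow (norm_nonneg _), ← ENNReal.ofReal_mul (by positivity)]
      refine ENNReal.ofReal_le_ofReal ?_
      have h1 := norm_exp_phase_sub_sq_le ha ha1 hN0 hk ht
      rw [← hτ, ← hw] at h1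
      simp only [norm_mul, Complex.norm_real, Real.norm_eq_abs, mul_pow, sq_abs, Complex.norm_ofNat]
      have h2 : cos (k * z) ^ 2 ≤ 1 := cos_sq_le_one _
      calc _ ≤ 1 * 2 ^ 2 * (2 * (N ^ (a - 4) * (k ^ 2 - N ^ 2) ^ 2)) * ‖F η‖ ^ 2 := by gcongr
        _ = _ := by ring
    · rw [enorm_mul, enorm_neg, ← ofReal_norm, hw1]
      simp
  have hmeas : Measurable fun η : E => 2 * (ENNReal.ofReal (8 * N ^ (a - 4)) *
        ‖(((2 * π * ‖η‖) ^ 2 - N ^ 2 : ℝ) : ℂ) * F η‖ₑ ^ 2) := by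
    have := c0.measurable
    fun_prop
  refine (lintegral_mono hpt).trans ?_
  rw [lintegral_add_left hmeas, lintegral_const_mul' _ _ (by simp),
    lintegral_const_mul' _ _ ENNReal.ofReal_ne_top, lintegral_const_mul' _ _ (by simp)]
  refine (add_le_add (mul_le_mul_right (mul_le_mul_right hfreq _) _)
    (mul_le_mul_right hcos _)).trans_eq ?_
  have e2 : N ^ (a - 4) * N ^ 2 = N ^ (a - 2) := by
    rw [← Real.rpow_natCast N 2, ← Real.rpow_add hN0]
    norm_num
    ring_nf
  have e3 : ∀ A B D : ℝ, 0 ≤ A → 0 ≤ B → 0 ≤ D → 2 * (ENNReal.ofReal A * (ENNReal.ofReal B * m)) +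
      2 * (ENNReal.ofReal D * m) = ENNReal.ofReal (2 * A * B + 2 * D) * m := by
    intro A B D hA hB hD
    rw [ENNReal.ofReal_add (by positivity) (by positivity), ENNReal.ofReal_mul (by positivity),
      ENNReal.ofReal_mul (p := 2) (by positivity), ENNReal.ofReal_mul (p := 2) (by positivity),
      ENNReal.ofReal_ofNat]
    ring
  rw [e3 _ _ _ (by positivity) (by positivity) (by positivity), ← e2]
  congr 2
  ring

end IsCutoff

end MassBound

/-- The annulus of radius `ρ + 1 / 2` and width `2 / δ`. -/
def shell (E : Type*) [NormedAddCommGroup E] (δ ρ : ℝ) : Set E := {x | |‖x‖ - 1 / 2 - ρ| < 1 / δ}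

theorem measurableSet_shell {E : Type*} [NormedAddCommGroup E] [MeasurableSpace E] [BorelSpace E]
    (δ ρ : ℝ) : MeasurableSet (shell E δ ρ) :=
  (isOpen_lt (by fun_prop) continuous_const).measurableSet

section MassLower

variable {E : Type*} [NormedAddCommGroup E] [InnerProductSpace ℝ E] [FiniteDimensional ℝ E]
  [MeasurableSpace E] [BorelSpace E]

theorem measurable_waveEvol {a : ℝ} (ha : 0 < a) {F : E → ℂ} (hF : Integrable F) (y t : ℝ) :
    Measurable (waveEvol a F y t) :=
  ((continuous_waveEvol ha hF).comp
    (by fun_prop : Continuous fun x : E => ((y, t), x))).measurable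

theorem ShellProfile.lintegral_shellFn_lt_top {ψ : ℝ → ℂ} (hψ : ShellProfile ψ) (q : ℝ) :
    ∫⁻ x : E, ‖shellFn q ψ x‖ₑ ^ 2 < ⊤ := by
  have h : MemLp (shellFn q ψ : E → ℂ) 2 := by
    rw [← hψ.coe_toSchwartz_rpow_mul]
    exact SchwartzMap.memLp _ 2 volume
  have := (h.integrable_norm_pow two_ne_zero).2
  simpa [HasFiniteIntegral, enorm_pow] using this

namespace IsCutoff

variable {φ : ℝ → ℝ} {M δ N : ℝ}

theorem mass_lt_top [Nontrivial E] (hφ : IsCutoff φ M) (hδ : 8 ≤ δ) {p : ℝ}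
    (hp : (Module.finrank ℝ E : ℝ) - 1 = -2 * p) :
    (volume : Measure E).toSphere Set.univ * ∫⁻ r, ‖packet φ δ N r‖ₑ ^ 2 < ⊤ := by
  have hψ : CoreProfile (packet φ δ N) := hφ.coreProfile_packet hδ
  have h := hψ.lintegral_shellFn_shift (E := E) hp (s := 0) (by norm_num)
  simp only [sub_zero] at h
  rw [← h]
  exact hψ.shellProfile.lintegral_shellFn_lt_top p

/-- At a fixed time, one of the two evolved packets carries mass on the travelling annulus. -/
theorem mass_le_setLIntegral_shell [Nontrivial E] (hφ : IsCutoff φ M) (hδ : 8 ≤ δ) (hN : δ ≤ N)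
    {p : ℝ} (hp : (Module.finrank ℝ E : ℝ) - 1 = -2 * p) {a : ℝ} (ha : 0 < a) (ha1 : a < 1)
    {z t : ℝ} (hz : 1 / δ ≤ z) (hz8 : z < 1 / 8) (ht : |t| ≤ 1)
    (hsmall : 16 * (512 * (p * (p + 1)) ^ 2 + 36 * M ^ 2) * (N ^ (a - 2) * δ ^ 2) +
          2048 * (p * (p + 1)) ^ 2 * z ^ 4 ≤ 1 / 4) :
    (volume : Measure E).toSphere Set.univ * ∫⁻ r, ‖packet φ δ N r‖ₑ ^ 2 ≤
      8 * ((∫⁻ x in shell E δ z, ‖waveEvol a (𝓕 (shellFn p (packet φ δ N) : E → ℂ))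
          (z - a * N ^ (a - 1) * t) t x‖ₑ ^ 2) +
        ∫⁻ x in shell E δ z, ‖waveEvol a (𝓕 (shellFn p (packet φ δ N) : E → ℂ))
          (-z - a * N ^ (a - 1) * t) t x‖ₑ ^ 2) := by
  have hδ0 : 0 < δ := by linarith
  have hz0 : 0 ≤ z := (by positivity : 0 ≤ 1 / δ).trans hz
  have hψ : CoreProfile (packet φ δ N) := hφ.coreProfile_packet hδ
  have hD := hφ.lintegral_waveEvol_error_le (E := E) hδ hN hp ha ha1 hz0 hz8 ht
  have hm := hφ.mass_lt_top (E := E) (N := N) hδ hp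
  have hmass := hψ.lintegral_shellFn_shift (E := E) hp (s := z)
    (by rw [abs_of_nonneg hz0]; exact hz8.le)
  have i0 := hψ.shellProfile.integrable_fourier_shellFn (E := E) p
  generalize 𝓕 (shellFn p (packet φ δ N) : E → ℂ) = F at *
  have m1 := measurable_waveEvol ha i0 (z - a * N ^ (a - 1) * t) t
  have m2 := measurable_waveEvol ha i0 (-z - a * N ^ (a - 1) * t) t
  set m := (volume : Measure E).toSphere Set.univ * ∫⁻ r, ‖packet φ δ N r‖ₑ ^ 2
  generalize waveEvol a F (z - a * N ^ (a - 1) * t) t = U₁ at *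
  generalize waveEvol a F (-z - a * N ^ (a - 1) * t) t = U₂ at *
  set w := Complex.exp (Complex.I * ((t * (N ^ a - a * N ^ a) : ℝ) : ℂ)) with hw
  have hw1 : ‖w‖ₑ = 1 := by
    rw [← ofReal_norm, hw, mul_comm, Complex.norm_exp_ofReal_mul_I, ENNReal.ofReal_one]
  have hD' : ∫⁻ x, ‖U₁ x + U₂ x - w * (shellFn p (fun r => packet φ δ N (r - z)) x +
      shellFn p (fun r => packet φ δ N (r - -z)) x)‖ₑ ^ 2 ≤ m / 4 := by
    refine hD.trans ((mul_le_mul_left (ENNReal.ofReal_le_ofReal hsmall) _).trans_eq ?_)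
    rw [one_div, ENNReal.ofReal_inv_of_pos (by norm_num), ENNReal.ofReal_ofNat, mul_comm,
      div_eq_mul_inv]
  have hS := measurableSet_shell (E := E) δ z
  have hzero : ∀ x : E, x ∉ shell E δ z → shellFn p (fun r => packet φ δ N (r - z)) x = 0 := by
    intro x hx
    rw [shellFn, hφ.packet_eq_zero hδ0, mul_zero]
    rw [sub_right_comm]
    exact not_lt.1 hx
  have hpt : ∀ x ∈ shell E δ z, ‖shellFn p (fun r => packet φ δ N (r - z)) x‖ₑ ^ 2 ≤
      (4 * ‖U₁ x‖ₑ ^ 2 + 4 * ‖U₂ x‖ₑ ^ 2) +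
      2 * ‖U₁ x + U₂ x - w * (shellFn p (fun r => packet φ δ N (r - z)) x +
        shellFn p (fun r => packet φ δ N (r - -z)) x)‖ₑ ^ 2 := by
    intro x hx
    have h0 : shellFn p (fun r => packet φ δ N (r - -z)) x = 0 := by
      rw [shellFn, hφ.packet_eq_zero hδ0, mul_zero]
      have hx' : |‖x‖ - 1 / 2 - z| < 1 / δ := hx
      rw [abs_lt] at hx'
      exact le_trans (by linarith [hx'.1]) (le_abs_self _)
    rw [h0, add_zero]
    set v := shellFn p (fun r => packet φ δ N (r - z)) x
    calc ‖v‖ₑ ^ 2 = ‖(U₁ x + U₂ x) + -(U₁ x + U₂ x - w * v)‖ₑ ^ 2 := by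
          rw [show (U₁ x + U₂ x) + -(U₁ x + U₂ x - w * v) = w * v by ring, enorm_mul, hw1, one_mul]
      _ ≤ 2 * ‖U₁ x + U₂ x‖ₑ ^ 2 + 2 * ‖U₁ x + U₂ x - w * v‖ₑ ^ 2 := by
          refine (enorm_add_sq_le _ _).trans_eq ?_
          rw [enorm_neg]
      _ ≤ 2 * (2 * ‖U₁ x‖ₑ ^ 2 + 2 * ‖U₂ x‖ₑ ^ 2) + 2 * ‖U₁ x + U₂ x - w * v‖ₑ ^ 2 :=
          add_le_add_left (mul_le_mul_right (enorm_add_sq_le _ _) _) _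
      _ = _ := by ring
  have key : m ≤ 4 * ((∫⁻ x in shell E δ z, ‖U₁ x‖ₑ ^ 2) + ∫⁻ x in shell E δ z, ‖U₂ x‖ₑ ^ 2) +
      m / 2 := by
    calc m = ∫⁻ x in shell E δ z, ‖shellFn p (fun r => packet φ δ N (r - z)) x‖ₑ ^ 2 := by
          rw [← hmass, ← lintegral_indicator hS]
          congr 1 with x
          by_cases hx : x ∈ shell E δ z
          · rw [Set.indicator_of_mem hx]
          · rw [Set.indicator_of_notMem hx, hzero x hx]
            simp
      _ ≤ _ := setLIntegral_mono' hS hpt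
      _ = 4 * ((∫⁻ x in shell E δ z, ‖U₁ x‖ₑ ^ 2) + ∫⁻ x in shell E δ z, ‖U₂ x‖ₑ ^ 2) +
          2 * ∫⁻ x in shell E δ z, ‖U₁ x + U₂ x -
            w * (shellFn p (fun r => packet φ δ N (r - z)) x +
              shellFn p (fun r => packet φ δ N (r - -z)) x)‖ₑ ^ 2 := by
          rw [lintegral_add_left (by fun_prop), lintegral_add_left (by fun_prop),
            lintegral_const_mul' _ _ (by simp), lintegral_const_mul' _ _ (by simp),
            lintegral_const_mul' _ _ (by simp), mul_add]
      _ ≤ _ := by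
          refine add_le_add_right ?_ _
          refine (mul_le_mul_right ((setLIntegral_le_lintegral _ _).trans hD') 2).trans_eq ?_
          rw [show (4 : ENNReal) = 2 * 2 by norm_num, ← mul_div_assoc,
            ENNReal.mul_div_mul_left _ _ (by simp) (by simp)]
  have h2 : m / 2 + m / 2 ≤ 4 * ((∫⁻ x in shell E δ z, ‖U₁ x‖ₑ ^ 2) +
      ∫⁻ x in shell E δ z, ‖U₂ x‖ₑ ^ 2) + m / 2 := by rwa [ENNReal.add_halves]
  have h3 := (ENNReal.add_le_add_iff_right (ENNReal.div_lt_top hm.ne (by simp)).ne).1 h2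
  calc m = 2 * (m / 2) := by rw [ENNReal.mul_div_cancel (by simp) (by simp)]
    _ ≤ _ := mul_le_mul_right h3 2
    _ = _ := by rw [← mul_assoc]; norm_num

end IsCutoff

end MassLower

section Summation

variable {E : Type*} [NormedAddCommGroup E] [InnerProductSpace ℝ E] [FiniteDimensional ℝ E]
  [MeasurableSpace E] [BorelSpace E]

/-- The mass at position `w - v t` and time `t` on the annulus travelling with `|w|`. -/
def travellingMass (a δ v : ℝ) (F : E → ℂ) (t w : ℝ) : ENNReal :=
  ∫⁻ x in shell E δ |w|, ‖waveEvol a F (w - v * t) t x‖ₑ ^ 2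

theorem measurable_travellingMass {a : ℝ} (ha : 0 < a) (δ v : ℝ) {F : E → ℂ} (hF : Integrable F)
    (t : ℝ) : Measurable (travellingMass a δ v F t) := by
  have hS : MeasurableSet {q : ℝ × E | |(‖q.2‖ - 1 / 2 - |q.1|)| < 1 / δ} :=
    (isOpen_lt (by fun_prop) continuous_const).measurableSet
  have hU : Measurable fun q : ℝ × E => ‖waveEvol a F (q.1 - v * t) t q.2‖ₑ ^ 2 :=
    (((continuous_waveEvol ha hF).comp
      (by fun_prop : Continuous fun q : ℝ × E => ((q.1 - v * t, t), q.2))).measurable.enorm).pow_const 2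
  have e : travellingMass a δ v F t = fun w => ∫⁻ x, {q : ℝ × E | |(‖q.2‖ - 1 / 2 - |q.1|)| < 1 / δ}.indicator
      (fun q => ‖waveEvol a F (q.1 - v * t) t q.2‖ₑ ^ 2) (w, x) := by
    funext w
    rw [travellingMass, ← lintegral_indicator (measurableSet_shell δ |w|)]
    rfl
  rw [e]
  exact (hU.indicator hS).lintegral_prod_right'

/-- The set of positions `w` with `c < |w| < 2 * c`. -/
def window (c : ℝ) : Set ℝ := {w | c < |w| ∧ |w| < 2 * c}

theorem measurableSet_window (c : ℝ) : MeasurableSet (window c) :=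
  ((isOpen_lt continuous_const continuous_abs).inter
    (isOpen_lt continuous_abs continuous_const)).measurableSet

theorem abs_sub_le_of_mem_window {c u v : ℝ} (hu : u ∈ window c) (hv : v ∈ window c)
    (huv : |u - v| ≤ 2 * c) : |u - v| ≤ |(|u| - |v|)| := by
  obtain ⟨hu1, hu2⟩ := hu
  obtain ⟨hv1, hv2⟩ := hv
  rcases le_total 0 u with h | h <;> rcases le_total 0 v with h' | h' <;>
    simp only [abs_of_nonneg, abs_of_nonpos, h, h'] at hu1 hu2 hv1 hv2 ⊢
  · exact le_rfl
  · linarith [le_abs_self (u - v)]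
  · linarith [neg_abs_le (u - v)]
  · rw [abs_sub_comm]
    exact le_of_eq (congrArg _ (by ring))

theorem sum_indicator_travellingMass_le {a δ v c : ℝ} (hδ : 8 ≤ δ) (hc : c ≤ 1 / 16) (hv0 : 0 < v)
    (hv : v ≤ 2 * c) {J : ℕ} (hgap : 2 / δ ≤ v / J) {F : E → ℂ} {G : ℝ → E → ENNReal}
    (hG : ∀ y x, ∀ t ∈ Set.Ico (0 : ℝ) 1, ‖waveEvol a F y t x‖ₑ ^ 2 ≤ G y x) (y : ℝ) :
    ∑ j ∈ Finset.range J, (window c).indicator (travellingMass a δ v F (j / J)) (y + v * (j / J)) ≤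
      (Set.Ioo (-1 : ℝ) 1).indicator (fun y => ∫⁻ x in Metric.ball (0 : E) 1, G y x) y := by
  classical
  have ht : ∀ j ∈ Finset.range J, (j / J : ℝ) ∈ Set.Ico (0 : ℝ) 1 := by
    intro j hj
    have hj' : (j : ℝ) < J := by exact_mod_cast Finset.mem_range.1 hj
    have hJ : (0 : ℝ) < J := (Nat.cast_nonneg j).trans_lt hj'
    exact ⟨by positivity, (div_lt_one hJ).2 hj'⟩
  have h8 : 1 / δ ≤ 1 / 8 := one_div_le_one_div_of_le (by norm_num) hδ
  by_cases hy : y ∈ Set.Ioo (-1 : ℝ) 1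
  · rw [Set.indicator_of_mem hy]
    set T := (Finset.range J).filter fun j : ℕ => y + v * ((j : ℝ) / J) ∈ window c with hT
    have hTd : (T : Set ℕ).PairwiseDisjoint fun j : ℕ => shell E δ |y + v * ((j : ℝ) / J)| := by
      intro i hi j hj hij
      rw [Function.onFun, Set.disjoint_left]
      intro x hxi hxj
      have hi' := Finset.mem_filter.1 (Finset.mem_coe.1 hi)
      have hj' := Finset.mem_filter.1 (Finset.mem_coe.1 hj)
      have hti := ht i hi'.1
      have htj := ht j hj'.1
      have hxi' : |(‖x‖ - 1 / 2 - |y + v * ((i : ℝ) / J)|)| < 1 / δ := hxi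
      have hxj' : |(‖x‖ - 1 / 2 - |y + v * ((j : ℝ) / J)|)| < 1 / δ := hxj
      have hJ : (0 : ℝ) < J := by
        have := Finset.mem_range.1 hi'.1
        exact_mod_cast (Nat.zero_le i).trans_lt this
      have hd : (y + v * ((i : ℝ) / J)) - (y + v * ((j : ℝ) / J)) = v / J * (i - j) := by ring
      have hd2 : (y + v * ((i : ℝ) / J)) - (y + v * ((j : ℝ) / J)) = v * (i / J - j / J) := by ring
      have hle : |(y + v * ((i : ℝ) / J)) - (y + v * ((j : ℝ) / J))| ≤ 2 * c := by
        rw [hd2, abs_mul, abs_of_pos hv0]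
        have : |(i / J - j / J : ℝ)| ≤ 1 := abs_le.2
          ⟨by linarith [hti.1, htj.2], by linarith [hti.2, htj.1]⟩
        nlinarith
      have h1 := abs_sub_le_of_mem_window hi'.2 hj'.2 hle
      have h2 : |(|y + v * ((i : ℝ) / J)| - |y + v * ((j : ℝ) / J)|)| < 2 / δ := by
        rw [abs_lt] at hxi' hxj' ⊢
        have : 2 / δ = 1 / δ + 1 / δ := by ring
        constructor <;> linarith [hxi'.1, hxi'.2, hxj'.1, hxj'.2]
      have h3 : v / J ≤ |(y + v * ((i : ℝ) / J)) - (y + v * ((j : ℝ) / J))| := by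
        rw [hd, abs_mul, abs_of_pos (by positivity)]
        have : (1 : ℝ) ≤ |(i : ℝ) - j| := by
          have : (1 : ℤ) ≤ |(i : ℤ) - j| := Int.one_le_abs (by omega)
          exact_mod_cast this
        exact le_mul_of_one_le_right (by positivity) this
      linarith
    calc _ = ∑ j ∈ T, travellingMass a δ v F (j / J) (y + v * (j / J)) := by
          rw [hT, Finset.sum_filter]
          exact Finset.sum_congr rfl fun j _ => Set.indicator_apply _ _ _
      _ ≤ ∑ j ∈ T, ∫⁻ x in shell E δ |y + v * ((j : ℝ) / J)|, G y x := by
          refine Finset.sum_le_sum fun j hj => lintegral_mono fun x => ?_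
          rw [add_sub_cancel_right]
          exact hG y x _ (ht j (Finset.mem_filter.1 hj).1)
      _ = ∫⁻ x in ⋃ j ∈ T, shell E δ |y + v * ((j : ℝ) / J)|, G y x :=
          (lintegral_biUnion_finset hTd (fun j _ => measurableSet_shell _ _) _).symm
      _ ≤ _ := by
          refine lintegral_mono_set (Set.iUnion₂_subset fun j hj x hx => ?_)
          have hx' : |(‖x‖ - 1 / 2 - |y + v * ((j : ℝ) / J)|)| < 1 / δ := hx
          have hw := (Finset.mem_filter.1 hj).2.2
          rw [mem_ball_zero_iff]
          linarith [(abs_lt.1 hx').2]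
  · rw [Set.indicator_of_notMem hy]
    refine (Finset.sum_eq_zero fun j hj => Set.indicator_of_notMem (fun hw => hy ?_) _).le
    have h1 := ht j hj
    have h2 := abs_lt.1 hw.2
    have h3 : 0 ≤ v * ((j : ℝ) / J) := mul_nonneg hv0.le h1.1
    have h4 : v * ((j : ℝ) / J) ≤ v := mul_le_of_le_one_right hv0.le h1.2.le
    exact ⟨by linarith [h2.1], by linarith [h2.2]⟩

/-- Lower bound for the maximal function of a packet: the contributions of `J` times add up. -/
theorem IsCutoff.sum_mass_le [Nontrivial E] {φ : ℝ → ℝ} {M δ N : ℝ} (hφ : IsCutoff φ M)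
    (hδ : 8 ≤ δ) (hN : δ ≤ N) {p : ℝ} (hp : (Module.finrank ℝ E : ℝ) - 1 = -2 * p) {a : ℝ}
    (ha : 0 < a) (ha1 : a < 1) {c : ℝ} (hcδ : 1 / δ ≤ c) (hc : c ≤ 1 / 16)
    (hsmall : 16 * (512 * (p * (p + 1)) ^ 2 + 36 * M ^ 2) * (N ^ (a - 2) * δ ^ 2) +
      2048 * (p * (p + 1)) ^ 2 * (2 * c) ^ 4 ≤ 1 / 4)
    (hv : a * N ^ (a - 1) ≤ 2 * c) {J : ℕ} (hgap : 2 / δ ≤ a * N ^ (a - 1) / J)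
    {G : ℝ → E → ENNReal} (hG : ∀ y x, ∀ t ∈ Set.Ico (0 : ℝ) 1,
      ‖waveEvol a (𝓕 (shellFn p (packet φ δ N) : E → ℂ)) y t x‖ₑ ^ 2 ≤ G y x) :
    J * (ENNReal.ofReal c *
        ((volume : Measure E).toSphere Set.univ * ∫⁻ r, ‖packet φ δ N r‖ₑ ^ 2)) ≤
      16 * ∫⁻ y in Set.Ioo (-1 : ℝ) 1, ∫⁻ x in Metric.ball (0 : E) 1, G y x := by
  have hN0 : 0 < N := by linarith
  have hv0 : 0 < a * N ^ (a - 1) := mul_pos ha (Real.rpow_pos_of_pos hN0 _)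
  have i0 := (hφ.coreProfile_packet (N := N) hδ).shellProfile.integrable_fourier_shellFn (E := E) p
  have hmass := fun z t => hφ.mass_le_setLIntegral_shell (E := E) hδ hN hp ha ha1 (z := z) (t := t)
  generalize 𝓕 (shellFn p (packet φ δ N) : E → ℂ) = F at *
  set m := (volume : Measure E).toSphere Set.univ * ∫⁻ r, ‖packet φ δ N r‖ₑ ^ 2
  set v := a * N ^ (a - 1) with hvdef
  have hm : ∀ t, Measurable ((window c).indicator (travellingMass a δ v F t)) := fun t =>
    (measurable_travellingMass ha δ v i0 t).indicator (measurableSet_window c)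
  have hone : ∀ t ∈ Set.Ico (0 : ℝ) 1, ENNReal.ofReal c * m ≤
      16 * ∫⁻ w, (window c).indicator (travellingMass a δ v F t) w := by
    intro t ht
    set P := (window c).indicator (travellingMass a δ v F t) with hP
    have hc0 : 0 ≤ c := (by positivity : 0 ≤ 1 / δ).trans hcδ
    have hpt : ∀ z ∈ Set.Ioo c (2 * c), m ≤ 8 * (P z + P (-z)) := by
      intro z hz
      have hz0 : 0 ≤ z := hc0.trans hz.1.le
      have hw1 : z ∈ window c := by
        simp only [window, Set.mem_ofPred_eq, abs_of_nonneg hz0]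
        exact hz
      have hw2 : -z ∈ window c := by
        simp only [window, Set.mem_ofPred_eq, abs_neg, abs_of_nonneg hz0]
        exact hz
      rw [hP, Set.indicator_of_mem hw1, Set.indicator_of_mem hw2, travellingMass, travellingMass,
        abs_neg, abs_of_nonneg hz0]
      refine hmass z t (hcδ.trans hz.1.le) (by linarith [hz.2])
        (abs_le.2 ⟨by linarith [ht.1], ht.2.le⟩) (le_trans ?_ hsmall)
      have := hz.2.le
      gcongr
    calc ENNReal.ofReal c * m = ∫⁻ _ in Set.Ioo c (2 * c), m := by
          rw [setLIntegral_const, Real.volume_Ioo, mul_comm]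
          congr 2
          ring
      _ ≤ ∫⁻ z in Set.Ioo c (2 * c), 8 * (P z + P (-z)) := setLIntegral_mono' measurableSet_Ioo hpt
      _ ≤ ∫⁻ z, 8 * (P z + P (-z)) := setLIntegral_le_lintegral _ _
      _ = 8 * ((∫⁻ z, P z) + ∫⁻ z, P (-z)) := by
          rw [lintegral_const_mul' _ _ (by simp), lintegral_add_left (hm t)]
      _ = 16 * ∫⁻ z, P z := by
          rw [lintegral_neg_eq_self, ← two_mul, ← mul_assoc]
          norm_num
  calc (J : ENNReal) * (ENNReal.ofReal c * m) = ∑ _ ∈ Finset.range J, ENNReal.ofReal c * m := by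
        simp
    _ ≤ ∑ j ∈ Finset.range J, 16 *
        ∫⁻ w, (window c).indicator (travellingMass a δ v F (j / J)) w := by
        refine Finset.sum_le_sum fun j hj => hone _ ?_
        have hj' : (j : ℝ) < J := by exact_mod_cast Finset.mem_range.1 hj
        have hJ : (0 : ℝ) < J := (Nat.cast_nonneg j).trans_lt hj'
        exact ⟨by positivity, (div_lt_one hJ).2 hj'⟩
    _ = 16 * ∫⁻ y, ∑ j ∈ Finset.range J,
        (window c).indicator (travellingMass a δ v F (j / J)) (y + v * (j / J)) := by
        have hm' : ∀ j ∈ Finset.range J, Measurable fun y : ℝ =>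
            (window c).indicator (travellingMass a δ v F (j / J)) (y + v * (j / J)) :=
          fun j _ => (hm _).comp (measurable_add_const _)
        rw [← Finset.mul_sum, lintegral_finsetSum _ hm']
        congr 2 with j
        exact (lintegral_add_right_eq_self _ _).symm
    _ ≤ 16 * ∫⁻ y, (Set.Ioo (-1 : ℝ) 1).indicator
        (fun y => ∫⁻ x in Metric.ball (0 : E) 1, G y x) y :=
        mul_le_mul_right (lintegral_mono fun y =>
          sum_indicator_travellingMass_le hδ hc hv0 hv hgap hG y) _
    _ = _ := by rw [lintegral_indicator measurableSet_Ioo]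

end Summation

section Weighted

variable {E : Type*} [NormedAddCommGroup E] [InnerProductSpace ℝ E] [FiniteDimensional ℝ E]
  [MeasurableSpace E] [BorelSpace E]

theorem one_add_sq_rpow_le {s k N : ℝ} (hs1 : s ≤ 1) (hN : 1 ≤ N) :
    (1 + k ^ 2) ^ s ≤ N ^ (2 * max s 0) * (4 + N ^ (-4 : ℝ) * (k ^ 2 - N ^ 2) ^ 2) := by
  have hN0 : 0 < N := by linarith
  set r := max s 0
  have hr0 : 0 ≤ r := le_max_right _ _
  have hr1 : r ≤ 1 := max_le hs1 zero_le_one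
  set q := (1 + k ^ 2) / N ^ 2 with hq
  have hq0 : 0 < q := by positivity
  have h1 : q ^ r ≤ 1 + q := by
    calc q ^ r ≤ (1 + q) ^ r := Real.rpow_le_rpow hq0.le (by linarith) hr0
      _ ≤ (1 + q) ^ (1 : ℝ) := Real.rpow_le_rpow_of_exponent_le (by linarith) hr1
      _ = 1 + q := Real.rpow_one _
  have e4 : N ^ (-4 : ℝ) = (N ^ 4)⁻¹ := by
    rw [Real.rpow_neg hN0.le]
    norm_cast
  have h2 : 1 + q ≤ 4 + N ^ (-4 : ℝ) * (k ^ 2 - N ^ 2) ^ 2 := by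
    set u := (k ^ 2 - N ^ 2) / N ^ 2 with hu
    have h3 : q = 1 / N ^ 2 + 1 + u := by
      rw [hq, hu]
      field_simp
      ring
    have h4 : N ^ (-4 : ℝ) * (k ^ 2 - N ^ 2) ^ 2 = u ^ 2 := by
      rw [e4, hu]
      field_simp
    have h5 : 1 / N ^ 2 ≤ 1 := by
      rw [div_le_one (by positivity)]
      nlinarith
    rw [h3, h4]
    nlinarith [sq_nonneg (u - 1 / 2)]
  have e : (1 + k ^ 2) = N ^ 2 * q := by
    rw [hq]
    field_simp
  calc (1 + k ^ 2) ^ s ≤ (1 + k ^ 2) ^ r :=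
        Real.rpow_le_rpow_of_exponent_le (by nlinarith) (le_max_left _ _)
    _ = N ^ (2 * r) * q ^ r := by
        rw [e, Real.mul_rpow (by positivity) hq0.le, Real.rpow_mul hN0.le, Real.rpow_two]
    _ ≤ _ := by
        gcongr
        exact h1.trans h2

/-- Weighted `L²` bound for the Fourier transform of a packet. -/
theorem IsCutoff.lintegral_weighted_le [Nontrivial E] {φ : ℝ → ℝ} {M δ N : ℝ} (hφ : IsCutoff φ M)
    (hδ : 8 ≤ δ) (hN : δ ≤ N) {p : ℝ} (hp : (Module.finrank ℝ E : ℝ) - 1 = -2 * p) {s : ℝ}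
    (hs1 : s ≤ 1) :
    ∫⁻ η : E, ENNReal.ofReal ((1 + (2 * π * ‖η‖) ^ 2) ^ s *
        ‖𝓕 (shellFn p (packet φ δ N) : E → ℂ) η‖ ^ 2) ≤
      ENNReal.ofReal ((4 + (512 * (p * (p + 1)) ^ 2 + 36 * M ^ 2)) * N ^ (2 * max s 0)) *
        ((volume : Measure E).toSphere Set.univ * ∫⁻ r, ‖packet φ δ N r‖ₑ ^ 2) := by
  have hN0 : 0 < N := by linarith
  have hψ : CoreProfile (packet φ δ N) := hφ.coreProfile_packet hδ
  have hfreq := hφ.lintegral_freq_le (E := E) hδ hN hp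
  have hmass := hψ.lintegral_shellFn_shift (E := E) hp (s := 0) (by norm_num)
  simp only [sub_zero] at hmass
  rw [← hψ.shellProfile.lintegral_fourier_shellFn] at hmass
  have c0 := (hψ.shellProfile.continuous_fourier_shellFn (E := E) p).measurable
  generalize 𝓕 (shellFn p (packet φ δ N) : E → ℂ) = F at *
  set m := (volume : Measure E).toSphere Set.univ * ∫⁻ r, ‖packet φ δ N r‖ₑ ^ 2
  set A := N ^ (2 * max s 0) with hA
  set C₁ := 512 * (p * (p + 1)) ^ 2 + 36 * M ^ 2 with hC₁
  have hC₁0 : 0 ≤ C₁ := by positivity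
  have hA0 : 0 < A := Real.rpow_pos_of_pos hN0 _
  have hB0 : 0 < N ^ (-4 : ℝ) := Real.rpow_pos_of_pos hN0 _
  have hpt : ∀ η : E, ENNReal.ofReal ((1 + (2 * π * ‖η‖) ^ 2) ^ s * ‖F η‖ ^ 2) ≤
      ENNReal.ofReal (4 * A) * ‖F η‖ₑ ^ 2 + ENNReal.ofReal (A * N ^ (-4 : ℝ)) *
        ‖(((2 * π * ‖η‖) ^ 2 - N ^ 2 : ℝ) : ℂ) * F η‖ₑ ^ 2 := by
    intro η
    rw [← ofReal_norm, ← ofReal_norm, ← ENNReal.ofReal_pow (norm_nonneg _),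
      ← ENNReal.ofReal_pow (norm_nonneg _), ← ENNReal.ofReal_mul (by positivity),
      ← ENNReal.ofReal_mul (by positivity), ← ENNReal.ofReal_add (by positivity) (by positivity)]
    refine ENNReal.ofReal_le_ofReal ?_
    rw [norm_mul, Complex.norm_real, Real.norm_eq_abs,
      mul_pow |(2 * π * ‖η‖) ^ 2 - N ^ 2|, sq_abs]
    have := one_add_sq_rpow_le (k := 2 * π * ‖η‖) hs1 (by linarith : 1 ≤ N)
    calc _ ≤ (A * (4 + N ^ (-4 : ℝ) * ((2 * π * ‖η‖) ^ 2 - N ^ 2) ^ 2)) * ‖F η‖ ^ 2 := by gcongr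
      _ = _ := by ring
  refine (lintegral_mono hpt).trans ?_
  rw [lintegral_add_left (by fun_prop), lintegral_const_mul' _ _ ENNReal.ofReal_ne_top,
    lintegral_const_mul' _ _ ENNReal.ofReal_ne_top, hmass]
  refine (add_le_add_right (mul_le_mul_right hfreq _) _).trans ?_
  clear_value m
  rw [← mul_assoc, ← add_mul, ← ENNReal.ofReal_mul (by positivity),
    ← ENNReal.ofReal_add (by positivity) (by positivity)]
  refine mul_le_mul_left (ENNReal.ofReal_le_ofReal ?_) _
  have e4 : N ^ (-4 : ℝ) = (N ^ 4)⁻¹ := by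
    rw [Real.rpow_neg hN0.le]
    norm_cast
  have h1 : N ^ (-4 : ℝ) * (N ^ 2 * δ ^ 2) ≤ 1 := by
    rw [e4, inv_mul_le_iff₀ (by positivity), mul_one]
    calc N ^ 2 * δ ^ 2 ≤ N ^ 2 * N ^ 2 := by gcongr
      _ = N ^ 4 := by ring
  nlinarith [mul_le_mul_of_nonneg_left h1 (mul_nonneg hA0.le hC₁0)]

/-- The maximal function of the evolution over times in `(-1, 1)`. -/
def waveMax (a : ℝ) (F : E → ℂ) (y : ℝ) (x : E) : ℝ :=
  ⨆ t : Set.Ioo (-1 : ℝ) 1, ‖waveEvol a F y t x‖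

theorem bddAbove_norm_waveEvol (a : ℝ) (F : E → ℂ) (y : ℝ) (x : E) :
    BddAbove (Set.range fun t : Set.Ioo (-1 : ℝ) 1 => ‖waveEvol a F y t x‖) :=
  ⟨∫ η, ‖F η‖, by rintro _ ⟨t, rfl⟩; exact norm_waveEvol_le a F y t x⟩

theorem waveMax_nonneg (a : ℝ) (F : E → ℂ) (y : ℝ) (x : E) : 0 ≤ waveMax a F y x :=
  Real.iSup_nonneg fun _ => norm_nonneg _

theorem waveMax_le (a : ℝ) (F : E → ℂ) (y : ℝ) (x : E) : waveMax a F y x ≤ ∫ η, ‖F η‖ :=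
  Real.iSup_le (fun t => norm_waveEvol_le a F y t x) (integral_nonneg fun _ => norm_nonneg _)

theorem measurable_waveMax {a : ℝ} (ha : 0 < a) {F : E → ℂ} (hF : Integrable F) :
    Measurable fun q : ℝ × E => waveMax a F q.1 q.2 := by
  refine LowerSemicontinuous.measurable ?_
  refine lowerSemicontinuous_ciSup (fun q => bddAbove_norm_waveEvol a F q.1 q.2) fun t => ?_
  exact ((continuous_waveEvol ha hF).comp
    (by fun_prop : Continuous fun q : ℝ × E => ((q.1, (t : ℝ)), q.2))).norm.lowerSemicontinuous

theorem lintegral_waveMax_sq_eq {a : ℝ} (ha : 0 < a) {F : E → ℂ} (hF : Integrable F) :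
    ∫⁻ y in Set.Ioo (-1 : ℝ) 1, ∫⁻ x in Metric.ball (0 : E) 1,
        ENNReal.ofReal (waveMax a F y x ^ 2) =
      ENNReal.ofReal (∫ y in Set.Ioo (-1 : ℝ) 1, ∫ x in Metric.ball (0 : E) 1,
        waveMax a F y x ^ 2) := by
  have hm := (measurable_waveMax ha hF).pow_const 2
  have hle : ∀ y x, ‖waveMax a F y x ^ 2‖ ≤ (∫ η, ‖F η‖) ^ 2 := fun y x => by
    rw [Real.norm_eq_abs, abs_of_nonneg (sq_nonneg _)]
    exact pow_le_pow_left₀ (waveMax_nonneg a F y x) (waveMax_le a F y x) 2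
  have hx : ∀ y, ∫⁻ x in Metric.ball (0 : E) 1, ENNReal.ofReal (waveMax a F y x ^ 2) =
      ENNReal.ofReal (∫ x in Metric.ball (0 : E) 1, waveMax a F y x ^ 2) := by
    intro y
    refine (ofReal_integral_eq_lintegral_ofReal ?_ (.of_forall fun x => sq_nonneg _)).symm
    exact IntegrableOn.of_bound measure_ball_lt_top
      (hm.comp measurable_prodMk_left).aestronglyMeasurable _ (.of_forall (hle y))
  simp only [hx]
  refine (ofReal_integral_eq_lintegral_ofReal ?_
    (.of_forall fun y => integral_nonneg fun x => sq_nonneg _)).symm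
  refine IntegrableOn.of_bound (by simp) ?_
    ((∫ η, ‖F η‖) ^ 2 * (volume : Measure E).real (Metric.ball 0 1)) (.of_forall fun y => ?_)
  · exact (hm.stronglyMeasurable.integral_prod_right).aestronglyMeasurable
  · exact norm_setIntegral_le_of_norm_le_const measure_ball_lt_top fun x _ => hle y x

theorem enorm_waveEvol_sq_le (a : ℝ) (F : E → ℂ) (y : ℝ) (x : E) {t : ℝ}
    (ht : t ∈ Set.Ioo (-1 : ℝ) 1) :
    ‖waveEvol a F y t x‖ₑ ^ 2 ≤ ENNReal.ofReal (waveMax a F y x ^ 2) := by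
  rw [← ofReal_norm, ← ENNReal.ofReal_pow (norm_nonneg _)]
  refine ENNReal.ofReal_le_ofReal (pow_le_pow_left₀ (norm_nonneg _) ?_ 2)
  exact le_ciSup (bddAbove_norm_waveEvol a F y x) ⟨t, ht⟩

end Weighted

/-- A maximal inequality bounds the number of times whose contributions are disjoint. -/
theorem IsCutoff.natCast_mul_le {n : ℕ} (hn : 2 ≤ n) {a s C : ℝ} (ha : 0 < a) (ha1 : a < 1)
    (hs1 : s ≤ 1) (hC : 0 < C)
    (h : ∀ f : EuclideanSpace ℝ (Fin n) → ℂ,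
      ContDiff ℝ (⊤ : ℕ∞) f → HasCompactSupport f → 0 ∉ tsupport f →
      (∀ x y : EuclideanSpace ℝ (Fin n), ‖x‖ = ‖y‖ → f x = f y) →
      (∫ y in Set.Ioo (-1 : ℝ) 1,
        ∫ x in Metric.ball (0 : EuclideanSpace ℝ (Fin n)) 1,
          (⨆ t : Set.Ioo (-1 : ℝ) 1,
            ‖SoscHat n a (fun ξ => Complex.exp (Complex.I * ((y * ‖ξ‖ : ℝ) : ℂ)) * FT n f ξ)
              x t‖) ^ 2)
        ≤ C * ∫ ξ, (1 + ‖ξ‖ ^ 2) ^ s * ‖FT n f ξ‖ ^ 2)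
    {φ : ℝ → ℝ} {M δ N : ℝ} (hφ : IsCutoff φ M) (hδ : 8 ≤ δ) (hN : δ ≤ N) {p : ℝ}
    (hp : (n : ℝ) - 1 = -2 * p) {c : ℝ} (hcδ : 1 / δ ≤ c) (hc : c ≤ 1 / 16)
    (hsmall : 16 * (512 * (p * (p + 1)) ^ 2 + 36 * M ^ 2) * (N ^ (a - 2) * δ ^ 2) +
      2048 * (p * (p + 1)) ^ 2 * (2 * c) ^ 4 ≤ 1 / 4)
    (hv : a * N ^ (a - 1) ≤ 2 * c) {J : ℕ} (hgap : 2 / δ ≤ a * N ^ (a - 1) / J) :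
    J * c ≤ 16 * (C * (2 * π) ^ n) * (4 + (512 * (p * (p + 1)) ^ 2 + 36 * M ^ 2)) *
      N ^ (2 * max s 0) := by
  have hrank : Module.finrank ℝ (EuclideanSpace ℝ (Fin n)) = n := finrank_euclideanSpace_fin
  have : Nontrivial (EuclideanSpace ℝ (Fin n)) :=
    Module.nontrivial_of_finrank_pos (R := ℝ) (by omega)
  have hp' : (Module.finrank ℝ (EuclideanSpace ℝ (Fin n)) : ℝ) - 1 = -2 * p := by rw [hrank, hp]
  have hN0 : 0 < N := by linarith
  have hc0 : 0 ≤ c := (by positivity : 0 ≤ 1 / δ).trans hcδ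
  have hψ : CoreProfile (packet φ δ N) := hφ.coreProfile_packet hδ
  have hq := hψ.shellProfile.rpow_mul p
  have hf := h (shellFn p (packet φ δ N)) hq.contDiff_comp_norm hq.hasCompactSupport_comp_norm
    hq.zero_notMem_tsupport fun x y hxy => by rw [shellFn, shellFn, hxy]
  rw [integral_FT_eq] at hf
  simp only [SoscHat_eq_fourierInv] at hf
  have i0 := hψ.shellProfile.integrable_fourier_shellFn (E := EuclideanSpace ℝ (Fin n)) p
  have hup := hφ.lintegral_weighted_le (E := EuclideanSpace ℝ (Fin n)) hδ hN hp' hs1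
  have hlow := hφ.sum_mass_le (E := EuclideanSpace ℝ (Fin n)) hδ hN hp' ha ha1 hcδ hc hsmall hv hgap
    (G := fun y x => ENNReal.ofReal (waveMax a
      (𝓕 (shellFn p (packet φ δ N) : EuclideanSpace ℝ (Fin n) → ℂ)) y x ^ 2))
    fun y x t ht => enorm_waveEvol_sq_le a _ y x ⟨by linarith [ht.1], ht.2⟩
  have hm := hφ.mass_lt_top (E := EuclideanSpace ℝ (Fin n)) (N := N) hδ hp'
  have hm0 : (volume : Measure (EuclideanSpace ℝ (Fin n))).toSphere Set.univ *
      ∫⁻ r, ‖packet φ δ N r‖ₑ ^ 2 ≠ 0 := by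
    refine mul_ne_zero ?_ ?_
    · rw [Measure.measure_univ_ne_zero]
      exact Measure.toSphere_ne_zero _
    · refine ((ENNReal.ofReal_pos.2 ?_).trans_le (hφ.le_lintegral_packet (by linarith))).ne'
      positivity
  have c0 := hψ.shellProfile.continuous_fourier_shellFn (E := EuclideanSpace ℝ (Fin n)) p
  generalize 𝓕 (shellFn p (packet φ δ N) : EuclideanSpace ℝ (Fin n) → ℂ) = F at *
  rw [lintegral_waveMax_sq_eq ha i0] at hlow
  generalize (volume : Measure (EuclideanSpace ℝ (Fin n))).toSphere Set.univ *
      ∫⁻ r, ‖packet φ δ N r‖ₑ ^ 2 = m at *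
  have hI : ENNReal.ofReal (∫ η : EuclideanSpace ℝ (Fin n),
      (1 + (2 * π * ‖η‖) ^ 2) ^ s * ‖F η‖ ^ 2) ≤
      ∫⁻ η : EuclideanSpace ℝ (Fin n), ENNReal.ofReal ((1 + (2 * π * ‖η‖) ^ 2) ^ s * ‖F η‖ ^ 2) := by
    rw [integral_eq_lintegral_of_nonneg_ae (.of_forall fun η => by positivity)]
    · exact ENNReal.ofReal_toReal_le
    · have := c0.measurable
      exact Measurable.aestronglyMeasurable (by fun_prop)
  set D := 4 + (512 * (p * (p + 1)) ^ 2 + 36 * M ^ 2) with hD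
  have hD0 : 0 ≤ D := by positivity
  have hA0 : 0 < N ^ (2 * max s 0) := Real.rpow_pos_of_pos hN0 _
  have hfin : ENNReal.ofReal (J * c) * m ≤
      ENNReal.ofReal (16 * (C * (2 * π) ^ n) * D * N ^ (2 * max s 0)) * m := by
    calc ENNReal.ofReal (J * c) * m = J * (ENNReal.ofReal c * m) := by
          rw [ENNReal.ofReal_mul (by positivity), ENNReal.ofReal_natCast, mul_assoc]
      _ ≤ _ := hlow
      _ ≤ 16 * (ENNReal.ofReal (C * (2 * π) ^ n) * (ENNReal.ofReal (D * N ^ (2 * max s 0)) * m)) := by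
          refine mul_le_mul_right ?_ _
          refine (ENNReal.ofReal_le_ofReal hf).trans ?_
          rw [← mul_assoc C, ENNReal.ofReal_mul (by positivity)]
          exact mul_le_mul_right (hI.trans hup) _
      _ = _ := by
          rw [mul_assoc 16 (C * (2 * π) ^ n), mul_assoc 16, ENNReal.ofReal_mul (p := 16) (by norm_num),
            mul_assoc (C * (2 * π) ^ n), ENNReal.ofReal_mul (p := C * (2 * π) ^ n) (by positivity),
            ENNReal.ofReal_ofNat]
          ring
  rw [ENNReal.mul_le_mul_iff_left hm0 hm.ne] at hfin
  exact (ENNReal.ofReal_le_ofReal_iff (by positivity)).1 hfin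

theorem eventually_scale_conditions {a c ε β B : ℝ} (ha : 0 < a) (ha1 : a < 1) (hc : 0 < c)
    (hε : 0 < ε) (hβ : 0 < β) :
    ∀ᶠ X : ℝ in Filter.atTop, 1 ≤ X ∧ 8 ≤ ε * X ^ (2 / a - 1) ∧ 1 / c ≤ ε * X ^ (2 / a - 1) ∧
      a * (X ^ (2 / a)) ^ (a - 1) ≤ 2 * c ∧ B < X ^ β := by
  have h2 : 0 < 2 / a - 1 := by
    rw [sub_pos, lt_div_iff₀ ha]
    linarith
  have t1 := (tendsto_rpow_atTop h2).const_mul_atTop hε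
  have t2 : Filter.Tendsto (fun X : ℝ => a * (X ^ (2 / a)) ^ (a - 1)) Filter.atTop (nhds 0) := by
    have := ((tendsto_rpow_neg_atTop (by linarith : 0 < 1 - a)).comp
      (tendsto_rpow_atTop (by positivity : 0 < 2 / a))).const_mul a
    simpa [Function.comp_def] using this
  filter_upwards [Filter.eventually_ge_atTop 1, t1.eventually_ge_atTop 8,
    t1.eventually_ge_atTop (1 / c), t2.eventually_le_const (by positivity : 0 < 2 * c),
    (tendsto_rpow_atTop hβ).eventually_gt_atTop B] with X x1 x2 x3 x4 x5
  exact ⟨x1, x2, x3, x4, x5⟩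

theorem stmt8 (n : ℕ) (hn : 2 ≤ n) (a : ℝ) (ha : 0 < a) (ha1 : a < 1) (s : ℝ)
    (h : ∃ C > 0, ∀ f : EuclideanSpace ℝ (Fin n) → ℂ,
      ContDiff ℝ (⊤ : ℕ∞) f → HasCompactSupport f → 0 ∉ tsupport f →
      (∀ x y : EuclideanSpace ℝ (Fin n), ‖x‖ = ‖y‖ → f x = f y) →
      (∫ y in Set.Ioo (-1 : ℝ) 1,
        ∫ x in Metric.ball (0 : EuclideanSpace ℝ (Fin n)) 1,
          (⨆ t : Set.Ioo (-1 : ℝ) 1,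
            ‖SoscHat n a (fun ξ => Complex.exp (Complex.I * ((y * ‖ξ‖ : ℝ) : ℂ)) * FT n f ξ)
              x t‖) ^ 2)
        ≤ C * ∫ ξ, (1 + ‖ξ‖ ^ 2) ^ s * ‖FT n f ξ‖ ^ 2) :
    a / 4 ≤ s := by
  obtain ⟨C, hC, h⟩ := h
  obtain ⟨φ, M, hφ⟩ := exists_isCutoff
  by_contra! hs
  have hr : max s 0 < a / 4 := max_lt hs (by positivity)
  set r := max s 0 with hrdef
  obtain ⟨p, hp⟩ : ∃ p : ℝ, (n : ℝ) - 1 = -2 * p := ⟨-((n : ℝ) - 1) / 2, by ring⟩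
  set κ := p * (p + 1) with hκ
  set C₁ := 512 * κ ^ 2 + 36 * M ^ 2 with hC₁
  have hC₁0 : 0 ≤ C₁ := by positivity
  obtain ⟨ε, hε, hε1, hε2⟩ : ∃ ε : ℝ, 0 < ε ∧ ε ≤ 1 ∧ 16 * C₁ * ε ^ 2 ≤ 1 / 8 := by
    have hpos : 0 < 128 * (C₁ + 1) := by positivity
    have hle : 1 / (128 * (C₁ + 1)) ≤ 1 := by
      rw [div_le_one hpos]
      linarith
    refine ⟨1 / (128 * (C₁ + 1)), by positivity, hle, ?_⟩
    have h1 : (1 / (128 * (C₁ + 1))) ^ 2 ≤ 1 / (128 * (C₁ + 1)) :=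
      pow_le_of_le_one (by positivity) hle two_ne_zero
    calc _ ≤ 16 * C₁ * (1 / (128 * (C₁ + 1))) := by gcongr
      _ ≤ 1 / 8 := by
        rw [mul_one_div, div_le_div_iff₀ hpos (by norm_num)]
        linarith
  obtain ⟨c, hc, hc1, hc2⟩ : ∃ c : ℝ, 0 < c ∧ c ≤ 1 / 16 ∧
      2048 * κ ^ 2 * (2 * c) ^ 4 ≤ 1 / 8 := by
    have hpos : 0 < 262144 * (κ ^ 2 + 1) := by positivity
    have hle : 1 / (262144 * (κ ^ 2 + 1)) ≤ 1 / 16 :=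
      one_div_le_one_div_of_le (by norm_num) (by nlinarith [sq_nonneg κ])
    refine ⟨1 / (262144 * (κ ^ 2 + 1)), by positivity, hle, ?_⟩
    have h1 : (1 / (262144 * (κ ^ 2 + 1))) ^ 4 ≤ 1 / (262144 * (κ ^ 2 + 1)) :=
      pow_le_of_le_one (by positivity) (hle.trans (by norm_num)) (by norm_num)
    calc _ = 32768 * κ ^ 2 * (1 / (262144 * (κ ^ 2 + 1))) ^ 4 := by ring
      _ ≤ 32768 * κ ^ 2 * (1 / (262144 * (κ ^ 2 + 1))) := by gcongr
      _ ≤ 1 / 8 := by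
        rw [mul_one_div, div_le_div_iff₀ hpos (by norm_num)]
        nlinarith
  have hβ : 0 < 1 - 4 * r / a := by
    rw [sub_pos, div_lt_one ha]
    linarith
  set K := 2 / (a * ε) with hK
  have hK0 : 0 < K := by positivity
  set D := 16 * (C * (2 * π) ^ n) * (4 + C₁) with hD
  have hlim : Filter.Tendsto (fun J : ℕ => K * (J : ℝ)) Filter.atTop Filter.atTop :=
    tendsto_natCast_atTop_atTop.const_mul_atTop hK0
  obtain ⟨J, hX1, hδ8, hδc, hv, hB⟩ := (hlim.eventually
    (eventually_scale_conditions (B := D * K / c) ha ha1 hc hε hβ)).exists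
  set X := K * (J : ℝ) with hX
  have hX0 : 0 < X := by linarith
  set N := X ^ (2 / a) with hN
  set δ := ε * X ^ (2 / a - 1) with hδ
  have hδ0 : 0 < δ := by linarith
  have hJ0 : (0 : ℝ) < J := by
    rw [hX] at hX0
    exact pos_of_mul_pos_right hX0 hK0.le
  have hδN : δ ≤ N := by
    have : X ^ (2 / a - 1) ≤ X ^ (2 / a) := Real.rpow_le_rpow_of_exponent_le hX1 (by linarith)
    calc δ ≤ 1 * X ^ (2 / a - 1) := by rw [hδ]; gcongr
      _ ≤ N := by rw [one_mul]; exact this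
  have e1 : N ^ (a - 2) * δ ^ 2 = ε ^ 2 := by
    rw [hN, hδ, mul_pow, ← Real.rpow_mul hX0.le, ← Real.rpow_natCast (X ^ (2 / a - 1)),
      ← Real.rpow_mul hX0.le, mul_left_comm, ← Real.rpow_add hX0]
    have : 2 / a * (a - 2) + (2 / a - 1) * ((2 : ℕ) : ℝ) = 0 := by
      push_cast
      field_simp
      ring
    rw [this, Real.rpow_zero, mul_one]
  have e2 : N ^ (a - 1) = X * (X ^ (2 / a - 1))⁻¹ := by
    rw [hN, ← Real.rpow_mul hX0.le, ← Real.rpow_neg hX0.le]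
    nth_rewrite 2 [← Real.rpow_one X]
    rw [← Real.rpow_add hX0]
    congr 1
    field_simp
    ring
  have hY0 : 0 < X ^ (2 / a - 1) := Real.rpow_pos_of_pos hX0 _
  have hgap : 2 / δ ≤ a * N ^ (a - 1) / J := by
    rw [e2, hδ, hX, hK]
    apply le_of_eq
    rw [← hK, ← hX]
    field_simp
    rw [hX, hK]
    field_simp
  have hsmall : 16 * C₁ * (N ^ (a - 2) * δ ^ 2) + 2048 * κ ^ 2 * (2 * c) ^ 4 ≤ 1 / 4 := by
    rw [e1]
    linarith
  have hcδ : 1 / δ ≤ c := by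
    rw [div_le_iff₀ hδ0]
    rw [div_le_iff₀ hc] at hδc
    linarith
  have key := hφ.natCast_mul_le hn ha ha1 (by linarith) hC h hδ8 hδN hp hcδ hc1 hsmall hv hgap
  rw [← hrdef, ← hκ, ← hC₁, ← hD, hN, ← Real.rpow_mul hX0.le] at key
  have e3 : X ^ (1 - 4 * r / a) * X ^ (2 / a * (2 * r)) = X := by
    rw [← Real.rpow_add hX0]
    have : 1 - 4 * r / a + 2 / a * (2 * r) = 1 := by ring
    rw [this, Real.rpow_one]
  have hZ0 : 0 < X ^ (2 / a * (2 * r)) := Real.rpow_pos_of_pos hX0 _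
  rw [div_lt_iff₀ hc] at hB
  have h1 : D * K * X ^ (2 / a * (2 * r)) < X * c := by
    calc _ < X ^ (1 - 4 * r / a) * c * X ^ (2 / a * (2 * r)) := by gcongr
      _ = (X ^ (1 - 4 * r / a) * X ^ (2 / a * (2 * r))) * c := by ring
      _ = X * c := by rw [e3]
  have h2 : X * c ≤ D * K * X ^ (2 / a * (2 * r)) := by
    calc X * c = K * (J * c) := by rw [hX]; ring
      _ ≤ K * (D * X ^ (2 / a * (2 * r))) := by gcongr
      _ = _ := by ring
  exact absurd h1 (not_lt.2 h2)
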